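/- For every N ∈ ℕ there exists a constant C > 0 such that for every λ ∈ h, every x ∈ a and all unit vectors ξ₁, …, ξ_N ∈ a, |∂_{ξ₁} ⋯ ∂_{ξ_N} G_λ(x)| ≤ C (1 + |λ|)^N F_0(x) e^{max_{w∈W} (w Re λ, x)}. -/

import Mathlib

open scoped BigOperators RealInnerProductSpace Classical

noncomputable section

variable {E : Type*} [NormedAddCommGroup E] [InnerProductSpace ℝ E] [FiniteDimensional ℝ E]

/-- The coroot `α∨ = 2α/|α|²`. -/
def coroot (α : E) : E := (2 / ⟪α, α⟫) • α

/-- The orthogonal reflection `r_α x = x - (α∨, x) α`. -/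
def rRefl (α : E) (x : E) : E := x - ⟪coroot α, x⟫ • α

/-- Data of an integral root system with positive subsystem and
a Weyl-invariant positive multiplicity function. -/
structure HOData (E : Type*) [NormedAddCommGroup E] [InnerProductSpace ℝ E] : Type _ where
  R : Finset E
  Rpos : Finset E
  k : E → ℝ
  k_pos : ∀ α ∈ R, 0 < k α
  root_ne_zero : ∀ α ∈ R, α ≠ 0
  pos_subset : Rpos ⊆ R
  pos_char : ∃ u : E, ∀ α ∈ R, (α ∈ Rpos ↔ 0 < ⟪α, u⟫)
  pos_or_neg : ∀ α ∈ R, α ∈ Rpos ∨ -α ∈ Rpos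
  neg_mem : ∀ α ∈ R, -α ∈ R
  integral : ∀ α ∈ R, ∀ β ∈ R, ∃ n : ℤ, ⟪coroot α, β⟫ = (n : ℝ)
  refl_mem : ∀ α ∈ R, ∀ β ∈ R, rRefl α β ∈ R
  k_inv : ∀ α ∈ R, ∀ β ∈ R, k (rRefl α β) = k β

/-- The Weyl group: the subgroup of linear isometries generated by the root reflections. -/
def weylGroup (D : HOData E) : Subgroup (E ≃ₗᵢ[ℝ] E) :=
  Subgroup.closure {w : E ≃ₗᵢ[ℝ] E | ∃ α ∈ D.R, ∀ x, w x = rRefl α x}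

/-- `ρ = (1/2) Σ_{α ∈ R⁺} k_α α`. -/
def rhoHO (D : HOData E) : E := (2:ℝ)⁻¹ • ∑ α ∈ D.Rpos, D.k α • α

/-- Regular points. -/
def HORegular (D : HOData E) (x : E) : Prop := ∀ α ∈ D.R, ⟪α, x⟫ ≠ 0

/-- The (open) positive Weyl chamber. -/
def posChamber (D : HOData E) : Set E := {x | ∀ α ∈ D.Rpos, 0 < ⟪α, x⟫}

/-- The positive indivisible roots `R₀⁺`. -/
def Rpos0 (D : HOData E) : Finset E := D.Rpos.filter (fun α => (2:ℝ)⁻¹ • α ∉ D.R)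

/-- The Opdam function `G_λ` for a real parameter `λ`: an analytic function,
normalized at `0`, satisfying the Cherednik differential-difference system. -/
def IsOpdamR (D : HOData E) (lam : E) (G : E → ℝ) : Prop :=
  AnalyticOnNhd ℝ G Set.univ ∧ G 0 = 1 ∧
  ∀ ξ x, HORegular D x →
    fderiv ℝ G x ξ =
      (∑ α ∈ D.Rpos, D.k α * ⟪α, ξ⟫ / (1 - Real.exp (-⟪α, x⟫)) * (G (rRefl α x) - G x))
      + ⟪rhoHO D + lam, ξ⟫ * G x

/-- The Opdam function `G_λ` for a complex parameter `λ = l1 + i l2 ∈ h`. -/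
def IsOpdamC (D : HOData E) (l1 l2 : E) (G : E → ℂ) : Prop :=
  AnalyticOnNhd ℝ G Set.univ ∧ G 0 = 1 ∧
  ∀ ξ x, HORegular D x →
    fderiv ℝ G x ξ =
      (∑ α ∈ D.Rpos, ((D.k α * ⟪α, ξ⟫ / (1 - Real.exp (-⟪α, x⟫)) : ℝ) : ℂ)
          * (G (rRefl α x) - G x))
      + (((⟪rhoHO D + l1, ξ⟫ : ℝ) : ℂ) + Complex.I * ((⟪l2, ξ⟫ : ℝ) : ℂ)) * G x

/-- The symmetrization `F(x) = |W|⁻¹ Σ_{w ∈ W} G(w x)` (real valued case). -/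
def Fsym (D : HOData E) [Fintype (weylGroup D)] (G : E → ℝ) (x : E) : ℝ :=
  (Fintype.card (weylGroup D) : ℝ)⁻¹ * ∑ w : weylGroup D, G (w.1 x)

/-- The symmetrization `F(x) = |W|⁻¹ Σ_{w ∈ W} G(w x)` (complex valued case). -/
def FsymC (D : HOData E) [Fintype (weylGroup D)] (G : E → ℂ) (x : E) : ℂ :=
  (Fintype.card (weylGroup D) : ℂ)⁻¹ * ∑ w : weylGroup D, G (w.1 x)

/-- `max_{w ∈ W} (w λ, x)`. -/
def maxW (D : HOData E) [Fintype (weylGroup D)] (lam x : E) : ℝ :=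
  ⨆ w : weylGroup D, ⟪w.1 lam, x⟫

open scoped Topology ContDiff

/-!
Along a ray `t ↦ t x` the reflection coefficients of the Cherednik system are nonnegative, so
comparison of the vector `(G_λ(w x))_w` with the positive one `(G_0(w x))_w` gives
`|G_λ(x)| ≤ G_0(x) e^{max_w (w Re λ, x)}`, and `G_0(w x) ≤ |W| F_0(x)`. Derivatives are reached by
a Cauchy estimate which never leaves the real domain. Every `x` is within `ε d` of some `p` which,
for each root `α`, satisfies `(α, p) = 0` or `|(α, p)| ≥ d`, where `d` is comparable to
`1 / (1 + |λ|)`. On a line through `p` the system becomes a Fuchsian one in `t`, whose residue is a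
nonnegative combination of reflection differences `G ∘ r_α - G`; such a residue obstructs no Taylor
coefficient, by the maximum principle on `W`, so the `n`-th one is `O((A / d)^n)` times
`max_w |G_λ(w p)|`. Polarization and recentring carry this to all derivatives at `x`, and the
Harnack inequality for `F_0` returns the bound from `p` to `x`.
-/

section Comparison

theorem hasDerivAt_nonpos_of_eventually_le_left {y : ℝ → ℝ} {y' t : ℝ} (hy : HasDerivAt y y' t)
    (hle : ∀ᶠ u in 𝓝[<] t, y t ≤ y u) : y' ≤ 0 := by
  have hslope :=
    (hasDerivWithinAt_iff_tendsto_slope' (s := Set.Iio t) (by simp)).1 hy.hasDerivWithinAt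
  refine le_of_tendsto hslope ?_
  filter_upwards [hle, self_mem_nhdsWithin] with u hu hut
  rw [slope_def_field]
  exact div_nonpos_of_nonneg_of_nonpos (sub_nonneg.2 hu) (sub_nonpos.2 (le_of_lt hut))

theorem exists_first_zero {ι : Type*} [Finite ι] {y : ι → ℝ → ℝ} (hy : ∀ w, Continuous (y w))
    (h0 : ∀ w, 0 < y w 0) {v : ι} {T : ℝ} (hT : 0 ≤ T) (hvT : y v T ≤ 0) :
    ∃ w, ∃ t > 0, y w t = 0 ∧ ∀ w', ∀ u ∈ Set.Icc 0 t, 0 ≤ y w' u := by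
  set Z : Set ℝ := Set.Icc 0 T ∩ ⋃ w, {t | y w t ≤ 0}
  have hZ : IsCompact Z :=
    isCompact_Icc.inter_right
      (isClosed_iUnion_of_finite fun w => isClosed_le (hy w) continuous_const)
  obtain ⟨t, ⟨⟨ht0, htT⟩, htZ⟩, hmin⟩ :=
    hZ.exists_isLeast ⟨T, Set.right_mem_Icc.2 hT, Set.mem_iUnion.2 ⟨v, hvT⟩⟩
  obtain ⟨w, hw⟩ := Set.mem_iUnion.1 htZ
  replace hw : y w t ≤ 0 := hw
  have ht : 0 < t := ht0.lt_of_ne fun h => (h0 w).not_ge (h ▸ hw)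
  have hpos : ∀ w', ∀ u ∈ Set.Ico 0 t, 0 ≤ y w' u := fun w' u hu => by
    by_contra! hneg
    exact hu.2.not_ge (hmin ⟨⟨hu.1, hu.2.le.trans htT⟩, Set.mem_iUnion.2 ⟨w', hneg.le⟩⟩)
  have hnonneg : ∀ w', ∀ u ∈ Set.Icc 0 t, 0 ≤ y w' u := fun w' => by
    rw [← closure_Ico ht.ne]
    exact closure_minimal (hpos w') (isClosed_le continuous_const (hy w'))
  exact ⟨w, t, ht, hw.antisymm (hnonneg w t ⟨ht0, le_rfl⟩), hnonneg⟩

variable {𝕜 F ι J : Type*} [RCLike 𝕜] [NormedAddCommGroup F] [NormedSpace ℝ F] [NormedSpace 𝕜 F]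
  [IsScalarTower ℝ 𝕜 F] [Finite ι] {s : Finset J} {σ : J → ι → ι} {b : J → ι → ℝ → ℝ}
  {Φ : ι → ℝ → F} {Ψ Ψ' : ι → ℝ → ℝ} {μ : ι → 𝕜} {ν : ι → ℝ}

theorem norm_lt_of_strict_supersolution (hb : ∀ j ∈ s, ∀ w, ∀ t > 0, 0 ≤ b j w t)
    (hμν : ∀ w, RCLike.re (μ w) ≤ ν w)
    (hΦc : ∀ w, Continuous (Φ w)) (hΨc : ∀ w, Continuous (Ψ w))
    (hΦ : ∀ w, ∀ t > 0, HasDerivAt (Φ w)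
      (∑ j ∈ s, b j w t • (Φ (σ j w) t - Φ w t) + μ w • Φ w t) t)
    (hΨ : ∀ w, ∀ t > 0, HasDerivAt (Ψ w) (Ψ' w t) t)
    (hsup : ∀ w, ∀ t > 0, ∑ j ∈ s, b j w t * (Ψ (σ j w) t - Ψ w t) + ν w * Ψ w t < Ψ' w t)
    (h0 : ∀ w, ‖Φ w 0‖ < Ψ w 0) (w : ι) {t : ℝ} (ht : 0 ≤ t) : ‖Φ w t‖ < Ψ w t := by
  by_contra! hcon
  obtain ⟨w, t, ht, hzero, hnonneg⟩ := exists_first_zero (y := fun w t => Ψ w t - ‖Φ w t‖)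
    (fun w => (hΨc w).sub (hΦc w).norm) (fun w => sub_pos.2 (h0 w)) ht (sub_nonpos.2 hcon)
  obtain ⟨u, hu, huΦ⟩ := exists_dual_vector'' 𝕜 (Φ w t)
  set g : ι → ℝ → ℝ := fun w' r => RCLike.re (u (Φ w' r))
  have hg : ∀ w' r, g w' r ≤ ‖Φ w' r‖ := fun w' r =>
    (RCLike.re_le_norm _).trans ((u.le_of_opNorm_le hu _).trans_eq (one_mul _))
  have hgw : g w t = ‖Φ w t‖ := by simp only [g, huΦ, RCLike.ofReal_re]
  have hΨw : Ψ w t = ‖Φ w t‖ := sub_eq_zero.1 hzero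
  have hderiv : HasDerivAt (g w)
      (∑ j ∈ s, b j w t * (g (σ j w) t - g w t) + RCLike.re (μ w) * ‖Φ w t‖) t := by
    refine ((RCLike.reCLM.comp (u.restrictScalars ℝ)).hasFDerivAt.comp_hasDerivAt t
      (hΦ w t ht)).congr_deriv ?_
    simp [g, huΦ, RCLike.smul_re]
  have hslope := hasDerivAt_nonpos_of_eventually_le_left ((hΨ w t ht).sub hderiv) <| by
    filter_upwards [Ico_mem_nhdsLT ht] with r hr
    have := hnonneg w r ⟨hr.1, hr.2.le⟩
    simp only [Pi.sub_apply]
    linarith [hg w r]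
  have hcoupling : ∑ j ∈ s, b j w t * (g (σ j w) t - g w t) ≤
      ∑ j ∈ s, b j w t * (Ψ (σ j w) t - Ψ w t) := by
    refine Finset.sum_le_sum fun j hj => mul_le_mul_of_nonneg_left ?_ (hb j hj w t ht)
    linarith [hg (σ j w) t, hnonneg (σ j w) t ⟨ht.le, le_rfl⟩]
  have hrate := mul_le_mul_of_nonneg_right (hμν w) (norm_nonneg (Φ w t))
  have := hsup w t ht
  rw [hΨw] at this hcoupling
  linarith

/-- The coefficients `b j w` may be singular at the starting time `0`. -/
theorem norm_le_of_supersolution (hb : ∀ j ∈ s, ∀ w, ∀ t > 0, 0 ≤ b j w t)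
    (hμν : ∀ w, RCLike.re (μ w) ≤ ν w)
    (hΦc : ∀ w, Continuous (Φ w)) (hΨc : ∀ w, Continuous (Ψ w))
    (hΦ : ∀ w, ∀ t > 0, HasDerivAt (Φ w)
      (∑ j ∈ s, b j w t • (Φ (σ j w) t - Φ w t) + μ w • Φ w t) t)
    (hΨ : ∀ w, ∀ t > 0, HasDerivAt (Ψ w) (Ψ' w t) t)
    (hsup : ∀ w, ∀ t > 0, ∑ j ∈ s, b j w t * (Ψ (σ j w) t - Ψ w t) + ν w * Ψ w t ≤ Ψ' w t)
    (h0 : ∀ w, ‖Φ w 0‖ ≤ Ψ w 0) (w : ι) {t : ℝ} (ht : 0 ≤ t) : ‖Φ w t‖ ≤ Ψ w t := by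
  obtain ⟨K, hK⟩ := (Set.finite_range ν).bddAbove
  have hνK : ∀ w, ν w < K + 1 := fun w => (hK ⟨w, rfl⟩).trans_lt (lt_add_one K)
  have hexp : ∀ r, HasDerivAt (fun r => Real.exp ((K + 1) * r))
      (Real.exp ((K + 1) * r) * (K + 1)) r := fun r => by
    simpa using ((hasDerivAt_id r).const_mul (K + 1)).exp
  have hperturbed : ∀ ε > 0, ‖Φ w t‖ < Ψ w t + ε * Real.exp ((K + 1) * t) := fun ε hε => by
    refine norm_lt_of_strict_supersolution (Ψ := fun w r => Ψ w r + ε * Real.exp ((K + 1) * r))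
      hb hμν hΦc (fun w => (hΨc w).add (by fun_prop)) hΦ
      (fun w r hr => (hΨ w r hr).add ((hexp r).const_mul ε)) (fun w r hr => ?_)
      (fun w => (h0 w).trans_lt (by simpa using hε)) w ht
    simp only [add_sub_add_right_eq_sub]
    nlinarith [hsup w r hr, mul_lt_mul_of_pos_right (hνK w)
      (mul_pos hε (Real.exp_pos ((K + 1) * r)))]
  refine le_of_forall_pos_lt_add fun δ hδ => ?_
  simpa [div_mul_cancel₀] using hperturbed (δ / Real.exp ((K + 1) * t)) (by positivity)

end Comparison

section TaylorSeries

variable {𝕜 A J : Type*} [NontriviallyNormedField 𝕜] [NormedCommRing A] [NormedAlgebra 𝕜 A]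
  {φ ψ : 𝕜 → A}

/-- The Taylor series at `0` of a function of one variable, as a formal power series. -/
def taylorSeries (φ : 𝕜 → A) : PowerSeries A :=
  PowerSeries.mk fun n => (n.factorial : 𝕜)⁻¹ • iteratedDeriv n φ 0

theorem coeff_taylorSeries (φ : 𝕜 → A) (n : ℕ) :
    PowerSeries.coeff n (taylorSeries φ) = (n.factorial : 𝕜)⁻¹ • iteratedDeriv n φ 0 :=
  PowerSeries.coeff_mk _ _

theorem coeff_zero_taylorSeries (φ : 𝕜 → A) : PowerSeries.coeff 0 (taylorSeries φ) = φ 0 := by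
  simp [coeff_taylorSeries]

theorem taylorSeries_congr (h : φ =ᶠ[𝓝 0] ψ) : taylorSeries φ = taylorSeries ψ := by
  ext n
  rw [coeff_taylorSeries, coeff_taylorSeries, h.iteratedDeriv_eq]

theorem taylorSeries_add (hφ : ContDiffAt 𝕜 ∞ φ 0) (hψ : ContDiffAt 𝕜 ∞ ψ 0) :
    taylorSeries (fun t => φ t + ψ t) = taylorSeries φ + taylorSeries ψ := by
  ext n
  simp only [coeff_taylorSeries, map_add, smul_add,
    iteratedDeriv_fun_add (contDiffAt_infty.1 hφ n) (contDiffAt_infty.1 hψ n)]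

theorem taylorSeries_sub (hφ : ContDiffAt 𝕜 ∞ φ 0) (hψ : ContDiffAt 𝕜 ∞ ψ 0) :
    taylorSeries (fun t => φ t - ψ t) = taylorSeries φ - taylorSeries ψ := by
  ext n
  simp only [coeff_taylorSeries, map_sub, smul_sub,
    iteratedDeriv_fun_sub (contDiffAt_infty.1 hφ n) (contDiffAt_infty.1 hψ n)]

theorem taylorSeries_sum {s : Finset J} {φ : J → 𝕜 → A} (hφ : ∀ j ∈ s, ContDiffAt 𝕜 ∞ (φ j) 0) :
    taylorSeries (fun t => ∑ j ∈ s, φ j t) = ∑ j ∈ s, taylorSeries (φ j) := by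
  ext n
  simp only [coeff_taylorSeries, map_sum,
    iteratedDeriv_fun_sum fun j hj => contDiffAt_infty.1 (hφ j hj) n, Finset.smul_sum]

theorem taylorSeries_const_mul (c : A) (hφ : ContDiffAt 𝕜 ∞ φ 0) :
    taylorSeries (fun t => c * φ t) = PowerSeries.C c * taylorSeries φ := by
  ext n
  rw [PowerSeries.coeff_C_mul, coeff_taylorSeries, coeff_taylorSeries,
    iteratedDeriv_const_mul c (contDiffAt_infty.1 hφ n), mul_smul_comm]

theorem taylorSeries_const (c : A) : taylorSeries (fun _ : 𝕜 => c) = PowerSeries.C c := by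
  ext n
  rcases n with _ | n <;> simp [coeff_taylorSeries, iteratedDeriv_const, PowerSeries.coeff_C]

theorem taylorSeries_algebraMap : taylorSeries (algebraMap 𝕜 A) = PowerSeries.X := by
  have hderiv : deriv (algebraMap 𝕜 A) = fun _ => 1 := by
    ext t
    exact (algebraMapCLM 𝕜 A).hasDerivAt.deriv.trans (map_one (algebraMap 𝕜 A))
  ext n
  rcases n with _ | _ | n
  · simp [coeff_taylorSeries]
  · simp [coeff_taylorSeries, hderiv]
  · simp [coeff_taylorSeries, iteratedDeriv_succ' (n := n + 1), hderiv, iteratedDeriv_const,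
      PowerSeries.coeff_X]

variable [CharZero 𝕜]

theorem taylorSeries_mul (hφ : ContDiffAt 𝕜 ∞ φ 0) (hψ : ContDiffAt 𝕜 ∞ ψ 0) :
    taylorSeries (fun t => φ t * ψ t) = taylorSeries φ * taylorSeries ψ := by
  ext n
  rw [PowerSeries.coeff_mul, coeff_taylorSeries,
    iteratedDeriv_fun_mul (contDiffAt_infty.1 hφ n) (contDiffAt_infty.1 hψ n),
    Finset.Nat.sum_antidiagonal_eq_sum_range_succ_mk, Finset.smul_sum]
  refine Finset.sum_congr rfl fun i hi => ?_
  have hchoose : (n.factorial : 𝕜)⁻¹ * (n.choose i : 𝕜) =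
      (i.factorial : 𝕜)⁻¹ * ((n - i).factorial : 𝕜)⁻¹ := by
    rw [Nat.cast_choose 𝕜 (Finset.mem_range_succ_iff.1 hi)]
    field_simp [Nat.factorial_ne_zero]
  rw [coeff_taylorSeries, coeff_taylorSeries, smul_mul_smul_comm, ← hchoose, mul_smul,
    Nat.cast_smul_eq_nsmul, nsmul_eq_mul, mul_assoc]

theorem taylorSeries_deriv (φ : 𝕜 → A) :
    taylorSeries (deriv φ) = PowerSeries.derivative A (taylorSeries φ) := by
  ext n
  have hn : (n + 1 : 𝕜) ≠ 0 := n.cast_add_one_ne_zero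
  rw [PowerSeries.coeff_derivative, coeff_taylorSeries, coeff_taylorSeries, ← iteratedDeriv_succ',
    ← Nat.cast_add_one, ← nsmul_eq_mul', ← Nat.cast_smul_eq_nsmul 𝕜, smul_smul, Nat.factorial_succ]
  push_cast
  field_simp

theorem taylorSeries_algebraMap_mul (hφ : ContDiffAt 𝕜 ∞ φ 0) :
    taylorSeries (fun t => algebraMap 𝕜 A t * φ t) = PowerSeries.X * taylorSeries φ := by
  rw [taylorSeries_mul (φ := algebraMap 𝕜 A) (algebraMapCLM 𝕜 A).contDiff.contDiffAt hφ,
    taylorSeries_algebraMap]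

end TaylorSeries

section FormalODE

open PowerSeries
open Finset.HasAntidiagonal (antidiagonal mem_antidiagonal)

theorem norm_sum_antidiagonal_mul_le {R : Type*} [SeminormedRing R] {x y : ℕ → R} {a c r : ℝ}
    {n : ℕ} (hx : ∀ m ≤ n, ‖x m‖ ≤ a * r ^ m) (hy : ∀ m ≤ n, ‖y m‖ ≤ c * r ^ m) :
    ‖∑ p ∈ antidiagonal n, x p.1 * y p.2‖ ≤ (n + 1) * (a * c * r ^ n) := by
  have hterm : ∀ p ∈ antidiagonal n, ‖x p.1 * y p.2‖ ≤ a * c * r ^ n := fun p hp => by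
    have hp := mem_antidiagonal.1 hp
    have hx1 := hx p.1 (by lia)
    calc ‖x p.1 * y p.2‖ ≤ (a * r ^ p.1) * (c * r ^ p.2) :=
          (norm_mul_le _ _).trans (mul_le_mul hx1 (hy p.2 (by lia)) (norm_nonneg _)
            ((norm_nonneg _).trans hx1))
      _ = a * c * r ^ n := by rw [← hp, pow_add]; ring
  exact (norm_sum_le_of_le _ hterm).trans_eq (by simp)

section Bernoulli

variable {𝕜 : Type*} [RCLike 𝕜] {f : PowerSeries 𝕜} {b : 𝕜}

theorem coeff_zero_eq_zero_or_one_of_bernoulli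
    (hf : X * derivative 𝕜 f = f + C b * (X * f) - f * f) : coeff 0 f = 0 ∨ coeff 0 f = 1 := by
  have h := congrArg (coeff 0) hf
  simp only [map_sub, map_add, coeff_zero_X_mul, coeff_C_mul, mul_zero, add_zero] at h
  rw [coeff_mul, Finset.Nat.antidiagonal_zero, Finset.sum_singleton] at h
  exact (mul_eq_zero.1 (show coeff 0 f * (coeff 0 f - 1) = 0 by linear_combination h)).imp_right
    sub_eq_zero.1

theorem coeff_add_two_mul_self {R : Type*} [CommSemiring R] (f : PowerSeries R) (n : ℕ) :
    coeff (n + 2) (f * f) = 2 * coeff 0 f * coeff (n + 2) f +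
      ∑ p ∈ antidiagonal n, coeff (p.1 + 1) f * coeff (p.2 + 1) f := by
  rw [coeff_mul, Finset.Nat.antidiagonal_succ_succ']
  simp only [Finset.sum_cons, Finset.sum_map]
  rw [← add_assoc]
  congr 1
  ring

theorem norm_add_one_le_of_eq_zero_or_one {c : 𝕜} (hc : c = 0 ∨ c = 1) (n : ℕ) :
    (n + 1 : ℝ) ≤ ‖(n + 1 + 2 * c : 𝕜)‖ := by
  rcases hc with rfl | rfl
  · rw [show (n + 1 + 2 * 0 : 𝕜) = ((n + 1 : ℕ) : 𝕜) by push_cast; ring, RCLike.norm_natCast]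
    push_cast
    exact le_rfl
  · rw [show (n + 1 + 2 * 1 : 𝕜) = ((n + 3 : ℕ) : 𝕜) by push_cast; ring, RCLike.norm_natCast]
    push_cast
    linarith

theorem norm_coeff_succ_le_of_bernoulli
    (hf : X * derivative 𝕜 f = f + C b * (X * f) - f * f) (n : ℕ) :
    ‖coeff (n + 1) f‖ ≤ ‖coeff 1 f‖ * (‖b‖ + ‖coeff 1 f‖) ^ n := by
  set H := ‖coeff 1 f‖
  have : 0 ≤ H := norm_nonneg _
  induction n using Nat.strong_induction_on with
  | _ n ih =>
    rcases n with _ | n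
    · simp [H]
    have hrec : (n + 1 + 2 * coeff 0 f) * coeff (n + 2) f = b * coeff (n + 1) f -
        ∑ p ∈ antidiagonal n, coeff (p.1 + 1) f * coeff (p.2 + 1) f := by
      have h := congrArg (coeff (n + 2)) hf
      rw [coeff_succ_X_mul, coeff_derivative, map_sub, map_add, coeff_C_mul, coeff_succ_X_mul,
        coeff_add_two_mul_self] at h
      push_cast at h
      linear_combination h
    have hsum : ‖∑ p ∈ antidiagonal n, coeff (p.1 + 1) f * coeff (p.2 + 1) f‖ ≤
        (n + 1) * (H * H * (‖b‖ + H) ^ n) :=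
      norm_sum_antidiagonal_mul_le (x := fun m => coeff (m + 1) f) (y := fun m => coeff (m + 1) f)
        (fun m hm => ih m (by lia)) fun m hm => ih m (by lia)
    refine le_of_mul_le_mul_left ?_ (n.cast_add_one_pos (α := ℝ))
    calc (n + 1 : ℝ) * ‖coeff (n + 2) f‖
        ≤ ‖(n + 1 + 2 * coeff 0 f) * coeff (n + 2) f‖ := by
          rw [norm_mul]
          exact mul_le_mul_of_nonneg_right (norm_add_one_le_of_eq_zero_or_one
            (coeff_zero_eq_zero_or_one_of_bernoulli hf) n) (norm_nonneg _)
      _ ≤ ‖b‖ * (H * (‖b‖ + H) ^ n) + (n + 1) * (H * H * (‖b‖ + H) ^ n) := by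
          rw [hrec]
          refine (norm_sub_le _ _).trans (add_le_add ?_ hsum)
          rw [norm_mul]
          exact mul_le_mul_of_nonneg_left (ih n (by lia)) (norm_nonneg _)
      _ ≤ (n + 1 : ℝ) * (H * (‖b‖ + H) ^ (n + 1)) := by
          have : 0 ≤ n * (‖b‖ * (H * (‖b‖ + H) ^ n)) := by positivity
          rw [pow_succ]
          linarith

end Bernoulli

section Fuchsian

variable {𝕜 F ι J : Type*} [RCLike 𝕜] {s : Finset J} {σ : J → ι → ι}

theorem norm_le_of_cooperative_linear_system [Finite ι] [NormedAddCommGroup F] [NormedSpace ℝ F]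
    {a ρ : ℝ} {e : J → ι → ℝ} {z r : ι → F} (he : ∀ j ∈ s, ∀ w, 0 ≤ e j w)
    (hz : ∀ w, a • z w = ∑ j ∈ s, e j w • (z (σ j w) - z w) + r w) (hr : ∀ w, ‖r w‖ ≤ ρ)
    (w : ι) : a * ‖z w‖ ≤ ρ := by
  rcases le_or_gt a 0 with ha | ha
  · exact (mul_nonpos_of_nonpos_of_nonneg ha (norm_nonneg _)).trans ((norm_nonneg _).trans (hr w))
  have : Nonempty ι := ⟨w⟩
  obtain ⟨v, hv⟩ := Finite.exists_max fun w => ‖z w‖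
  have hsum : 0 ≤ ∑ j ∈ s, e j v := Finset.sum_nonneg fun j hj => he j hj v
  have hrow : (a + ∑ j ∈ s, e j v) • z v = ∑ j ∈ s, e j v • z (σ j v) + r v := by
    rw [add_smul, hz v, Finset.sum_smul]
    simp only [smul_sub, Finset.sum_sub_distrib]
    abel
  have hnorm : ‖∑ j ∈ s, e j v • z (σ j v)‖ ≤ (∑ j ∈ s, e j v) * ‖z v‖ := by
    rw [Finset.sum_mul]
    refine norm_sum_le_of_le _ fun j hj => ?_
    rw [norm_smul, Real.norm_of_nonneg (he j hj v)]
    exact mul_le_mul_of_nonneg_left (hv _) (he j hj v)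
  have hbound : (a + ∑ j ∈ s, e j v) * ‖z v‖ ≤ (∑ j ∈ s, e j v) * ‖z v‖ + ρ := by
    rw [← Real.norm_of_nonneg (add_nonneg ha.le hsum), ← norm_smul, hrow]
    exact norm_add_le_of_le hnorm (hr v)
  have := mul_le_mul_of_nonneg_left (hv w) ha.le
  linarith

variable {e : J → ι → ℝ} {H : J → ℝ} {κ L M M₀ : ℝ} {E : J → ι → PowerSeries 𝕜}
  {μ : ι → 𝕜} {f : ι → PowerSeries 𝕜}

theorem coeff_succ_of_fuchsian (hE0 : ∀ j ∈ s, ∀ w, coeff 0 (E j w) = e j w)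
    (hf : ∀ w, X * derivative 𝕜 (f w) = ∑ j ∈ s, E j w * (f (σ j w) - f w) + C (μ w) * (X * f w))
    (n : ℕ) (w : ι) :
    (n + 1 : ℝ) • coeff (n + 1) (f w) =
      ∑ j ∈ s, e j w • (coeff (n + 1) (f (σ j w)) - coeff (n + 1) (f w)) +
      (∑ j ∈ s, ∑ p ∈ antidiagonal n,
        coeff (p.1 + 1) (E j w) * (coeff p.2 (f (σ j w)) - coeff p.2 (f w)) +
        μ w * coeff n (f w)) := by
  have h := congrArg (coeff (n + 1)) (hf w)
  rw [coeff_succ_X_mul, coeff_derivative, map_add, map_sum, coeff_C_mul, coeff_succ_X_mul] at h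
  rw [← add_assoc, ← Finset.sum_add_distrib, RCLike.real_smul_eq_coe_mul, mul_comm]
  push_cast
  rw [h]
  congr 1
  refine Finset.sum_congr rfl fun j hj => ?_
  rw [coeff_mul, Finset.Nat.sum_antidiagonal_succ, hE0 j hj, RCLike.real_smul_eq_coe_mul]
  simp only [map_sub]

theorem norm_coeff_le_of_fuchsian [Finite ι] (he : ∀ j ∈ s, ∀ w, 0 ≤ e j w) (hκ : 0 ≤ κ)
    (hκL : κ ≤ L) (hL : 2 * ∑ j ∈ s, H j + M ≤ L)
    (hE0 : ∀ j ∈ s, ∀ w, coeff 0 (E j w) = e j w)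
    (hE : ∀ j ∈ s, ∀ w n, ‖coeff (n + 1) (E j w)‖ ≤ H j * κ ^ n) (hμ : ∀ w, ‖μ w‖ ≤ M)
    (hf0 : ∀ w, ‖coeff 0 (f w)‖ ≤ M₀)
    (hf : ∀ w, X * derivative 𝕜 (f w) = ∑ j ∈ s, E j w * (f (σ j w) - f w) + C (μ w) * (X * f w))
    (n : ℕ) (w : ι) : ‖coeff n (f w)‖ ≤ L ^ n * M₀ := by
  have hM₀ : 0 ≤ M₀ := (norm_nonneg _).trans (hf0 w)
  have hM : 0 ≤ M := (norm_nonneg _).trans (hμ w)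
  have hH : ∀ j ∈ s, 0 ≤ H j := fun j hj => by
    simpa using (norm_nonneg _).trans (hE j hj w 0)
  have hL0 : 0 ≤ L := hκ.trans hκL
  induction n using Nat.strong_induction_on generalizing w with
  | _ n ih =>
    rcases n with _ | n
    · simpa using hf0 w
    have hconv : ∀ w, ∀ j ∈ s, ‖∑ p ∈ antidiagonal n,
        coeff (p.1 + 1) (E j w) * (coeff p.2 (f (σ j w)) - coeff p.2 (f w))‖ ≤
        (n + 1) * (H j * (2 * M₀) * L ^ n) := fun w j hj => by
      refine norm_sum_antidiagonal_mul_le (x := fun m => coeff (m + 1) (E j w))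
        (y := fun m => coeff m (f (σ j w)) - coeff m (f w)) (fun m _ => (hE j hj w m).trans ?_)
        fun m hm => (norm_sub_le_of_le (ih m (by lia) _) (ih m (by lia) _)).trans_eq (by ring)
      exact mul_le_mul_of_nonneg_left (pow_le_pow_left₀ hκ hκL _) (hH j hj)
    refine le_of_mul_le_mul_left ?_ (n.cast_add_one_pos (α := ℝ))
    refine norm_le_of_cooperative_linear_system he (coeff_succ_of_fuchsian hE0 hf n) (fun w => ?_) w
    calc ‖_‖ ≤ ∑ j ∈ s, (n + 1) * (H j * (2 * M₀) * L ^ n) + M * (L ^ n * M₀) :=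
          norm_add_le_of_le (norm_sum_le_of_le _ (hconv w)) ((norm_mul _ _).trans_le
            (mul_le_mul (hμ w) (ih n (by lia) w) (norm_nonneg _) hM))
      _ ≤ (n + 1) * ((2 * ∑ j ∈ s, H j + M) * (L ^ n * M₀)) := by
          have : 0 ≤ n * (M * (L ^ n * M₀)) := by positivity
          rw [← Finset.mul_sum, ← Finset.sum_mul, ← Finset.sum_mul]
          linarith
      _ ≤ (n + 1) * (L ^ (n + 1) * M₀) := by
          rw [pow_succ', mul_assoc]
          gcongr

end Fuchsian

end FormalODE

section Coupling

open PowerSeries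

theorem taylorSeries_ofReal {𝕜 : Type*} [RCLike 𝕜] {φ : ℝ → ℝ} (hφ : ContDiffAt ℝ ∞ φ 0) :
    taylorSeries (fun t => (φ t : 𝕜)) = PowerSeries.map (algebraMap ℝ 𝕜) (taylorSeries φ) := by
  ext n
  have hcomp := RCLike.ofRealCLM (K := 𝕜).iteratedFDeriv_comp_left (contDiffAt_infty.1 hφ n) le_rfl
  have hderiv : iteratedDeriv n (fun t => (φ t : 𝕜)) 0 = ((iteratedDeriv n φ 0 : ℝ) : 𝕜) :=
    congrArg (fun L => L fun _ => (1 : ℝ)) hcomp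
  rw [coeff_map, coeff_taylorSeries, coeff_taylorSeries, hderiv]
  simp [RCLike.real_smul_eq_coe_mul]

theorem bernoulli_of_mul_eq {𝕜 : Type*} [Field 𝕜] {S Q : PowerSeries 𝕜} {b : 𝕜} (hb : b ≠ 0)
    (hSQ : S * Q = C b * X) (hQ : derivative 𝕜 Q = C b * (1 - Q)) :
    X * derivative 𝕜 S = S + C b * (X * S) - S * S := by
  have hQ0 : Q ≠ 0 := by
    rintro rfl
    refine mul_ne_zero ((map_ne_zero_iff _ C_injective).2 hb) X_ne_zero ?_
    rw [← hSQ, mul_zero]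
  have hderiv : S * derivative 𝕜 Q + Q * derivative 𝕜 S = C b := by
    have h := congrArg (derivative 𝕜) hSQ
    rwa [Derivation.leibniz, Derivation.leibniz, derivative_X, derivative_C, smul_eq_mul,
      smul_eq_mul, smul_eq_mul, smul_eq_mul, mul_one, mul_zero, add_zero] at h
  refine mul_right_cancel₀ hQ0 ?_
  rw [hQ] at hderiv
  linear_combination X * hderiv + (S - 1) * hSQ

theorem abs_inv_one_sub_exp_neg_le {s : ℝ} (hs : s ≠ 0) :
    |(1 - Real.exp (-s))⁻¹| ≤ 1 + |s|⁻¹ := by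
  rw [abs_inv]
  rcases lt_or_gt_of_ne hs with hneg | hpos
  · have hle : -s ≤ |1 - Real.exp (-s)| := by
      rw [abs_sub_comm]
      exact (by linarith [Real.add_one_le_exp (-s)] : -s ≤ Real.exp (-s) - 1).trans (le_abs_self _)
    rw [abs_of_neg hneg]
    linarith [inv_anti₀ (neg_pos.2 hneg) hle]
  · have hexp : Real.exp (-s) ≤ (1 + s)⁻¹ := by
      rw [Real.exp_neg]
      exact inv_anti₀ (by linarith) (by linarith [Real.add_one_le_exp s])
    have hle : s / (1 + s) ≤ |1 - Real.exp (-s)| := by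
      rw [show s / (1 + s) = 1 - (1 + s)⁻¹ by field_simp; ring]
      exact (sub_le_sub_left hexp 1).trans (le_abs_self _)
    rw [abs_of_pos hpos]
    refine (inv_anti₀ (by positivity) hle).trans_eq ?_
    field_simp
    ring

theorem exists_analyticAt_eq_id_div {𝕜 : Type*} [NontriviallyNormedField 𝕜]
    {q : 𝕜 → 𝕜} (hq : AnalyticAt 𝕜 q 0) (hq' : deriv q 0 ≠ 0) :
    ∃ e : 𝕜 → 𝕜, AnalyticAt 𝕜 e 0 ∧ ∀ᶠ t in 𝓝[≠] 0, e t = t / q t := by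
  by_cases hq0 : q 0 = 0
  · have hslope : AnalyticAt 𝕜 (dslope q 0) 0 := by
      obtain ⟨p, hp⟩ := hq
      exact hp.has_fpower_series_dslope_fslope.analyticAt
    refine ⟨fun t => (dslope q 0 t)⁻¹, hslope.fun_inv (by rwa [dslope_same]), ?_⟩
    filter_upwards [self_mem_nhdsWithin] with t ht
    rw [dslope_of_ne _ ht, slope_def_field, hq0, sub_zero, sub_zero, inv_div]
  · exact ⟨fun t => t / q t, analyticAt_id.fun_div hq hq0, .of_forall fun _ => rfl⟩

theorem hasDerivAt_one_sub_exp_neg_line (s b t : ℝ) :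
    HasDerivAt (fun t => 1 - Real.exp (-(s + t * b))) (b * Real.exp (-(s + t * b))) t := by
  have hline : HasDerivAt (fun t => -(s + t * b)) (-b) t :=
    ((hasDerivAt_mul_const b).const_add s).fun_neg
  exact (hline.exp.const_sub 1).congr_deriv (by ring)

theorem derivative_taylorSeries_one_sub_exp_neg_line (s b : ℝ) :
    derivative ℝ (taylorSeries fun t => 1 - Real.exp (-(s + t * b))) =
      C b * (1 - taylorSeries fun t => 1 - Real.exp (-(s + t * b))) := by
  have hq : ContDiffAt ℝ ∞ (fun t => 1 - Real.exp (-(s + t * b))) 0 := by fun_prop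
  have hderiv : (deriv fun t => 1 - Real.exp (-(s + t * b))) =
      fun t => b * (1 - (1 - Real.exp (-(s + t * b)))) := by
    ext t
    rw [(hasDerivAt_one_sub_exp_neg_line s b t).deriv, sub_sub_cancel]
  rw [← taylorSeries_deriv, hderiv, taylorSeries_const_mul b (contDiffAt_const.sub hq),
    taylorSeries_sub contDiffAt_const hq, taylorSeries_const, map_one]

theorem abs_coeff_one_le_of_mul_eq {S Q : PowerSeries ℝ} {s b : ℝ} (hb : b ≠ 0)
    (hSQ : S * Q = C b * X) (hQ : derivative ℝ Q = C b * (1 - Q))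
    (hQ0 : coeff 0 Q = 1 - Real.exp (-s)) :
    |coeff 1 S| ≤ |b| * (1 + |s|⁻¹) := by
  have hone : coeff 0 S * (coeff 1 Q) + coeff 1 S * coeff 0 Q = b := by
    simpa [coeff_mul, Finset.Nat.antidiagonal_succ] using congrArg (coeff 1) hSQ
  have hQ1 : coeff 1 Q = b * (1 - coeff 0 Q) := by
    simpa [coeff_derivative] using congrArg (coeff 0) hQ
  have hbern := bernoulli_of_mul_eq hb hSQ hQ
  have hb1 : |b| ≤ |b| * (1 + |s|⁻¹) :=
    le_mul_of_one_le_right (abs_nonneg b) (by linarith [inv_nonneg.2 (abs_nonneg s)])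
  rcases coeff_zero_eq_zero_or_one_of_bernoulli hbern with h0 | h0
  · rw [h0, zero_mul, zero_add, hQ0] at hone
    have hs : s ≠ 0 := by
      rintro rfl
      simp [hb.symm] at hone
    rw [eq_div_of_mul_eq (fun h => by simp [h, hb.symm] at hone) hone, div_eq_mul_inv, abs_mul]
    exact mul_le_mul_of_nonneg_left (abs_inv_one_sub_exp_neg_le hs) (abs_nonneg b)
  · have htwo : 2 * coeff 1 S = b := by
      have h : coeff 1 S = coeff 1 S + b - (coeff 1 S + coeff 1 S) := by
        simpa [coeff_mul, Finset.Nat.antidiagonal_succ, coeff_derivative, h0, coeff_X, coeff_C]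
          using congrArg (coeff 1) hbern
      linarith
    refine le_trans ?_ hb1
    rw [← htwo, abs_mul, abs_two]
    linarith [abs_nonneg (coeff 1 S)]

/-- With the convention `0⁻¹ = 0` the bound is `|b| * (2 * |b|) ^ m` at the wall `s = 0`. -/
theorem exists_analyticAt_coupling (s b : ℝ) : ∃ e : ℝ → ℝ, AnalyticAt ℝ e 0 ∧
    (∀ᶠ t in 𝓝[≠] 0, e t = t * b / (1 - Real.exp (-(s + t * b)))) ∧ 0 ≤ e 0 ∧
    ∀ m, |coeff (m + 1) (taylorSeries e)| ≤
      |b| * (1 + |s|⁻¹) * (|b| * (2 + |s|⁻¹)) ^ m := by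
  rcases eq_or_ne b 0 with rfl | hb
  · refine ⟨fun _ => 0, analyticAt_const, by simp, le_rfl, fun m => ?_⟩
    simp [coeff_taylorSeries]
  set q : ℝ → ℝ := fun t => 1 - Real.exp (-(s + t * b))
  have hq : AnalyticAt ℝ q 0 := by fun_prop
  have hq' : HasDerivAt q (b * Real.exp (-(s + 0 * b))) 0 :=
    hasDerivAt_one_sub_exp_neg_line s b 0
  have hq0 : b * Real.exp (-(s + 0 * b)) ≠ 0 := mul_ne_zero hb (Real.exp_ne_zero _)
  obtain ⟨e, he, heq⟩ := exists_analyticAt_eq_id_div hq (hq'.deriv.trans_ne hq0)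
  have hmul : (fun t => b * e t * q t) =ᶠ[𝓝 0] fun t => b * t :=
    (((analyticAt_const.fun_mul he).fun_mul hq).frequently_eq_iff_eventually_eq
      (analyticAt_const.fun_mul analyticAt_id)).1 <| Filter.Eventually.frequently <| by
      filter_upwards [heq, hq'.eventually_ne hq0 (c := 0)] with t ht hqt
      rw [ht]
      field_simp
      rfl
  set S := taylorSeries fun t => b * e t
  set Q := taylorSeries q
  have hSQ : S * Q = C b * X := by
    rw [← taylorSeries_mul (analyticAt_const.fun_mul he).contDiffAt hq.contDiffAt,
      taylorSeries_congr hmul, taylorSeries_const_mul b contDiffAt_fun_id]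
    exact congrArg (C b * ·) (taylorSeries_algebraMap (𝕜 := ℝ) (A := ℝ))
  have hQ := derivative_taylorSeries_one_sub_exp_neg_line s b
  have hbern := bernoulli_of_mul_eq hb hSQ hQ
  refine ⟨fun t => b * e t, analyticAt_const.fun_mul he, ?_, ?_, fun m => ?_⟩
  · filter_upwards [heq] with t ht
    rw [ht]
    ring
  · refine (?_ : 0 ≤ coeff 0 S).trans_eq (coeff_zero_taylorSeries (𝕜 := ℝ) _)
    rcases coeff_zero_eq_zero_or_one_of_bernoulli hbern with h | h <;> simp [h]
  · have hone := abs_coeff_one_le_of_mul_eq (s := s) hb hSQ hQ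
      (by simp [Q, coeff_zero_taylorSeries, q])
    refine (norm_coeff_succ_le_of_bernoulli hbern m).trans ?_
    simp only [Real.norm_eq_abs]
    gcongr
    linarith

end Coupling

section Polarization

theorem sum_neg_one_pow_card_compl_of_subset {ι : Type*} [Fintype ι] (t : Finset ι) :
    ∑ s : Finset ι, (if t ⊆ s then (-1 : ℤ) ^ sᶜ.card else 0) = if t = .univ then 1 else 0 := by
  calc ∑ s : Finset ι, (if t ⊆ s then (-1 : ℤ) ^ sᶜ.card else 0)
      = ∑ s ∈ tᶜ.powerset, (-1 : ℤ) ^ s.card := by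
        rw [← Finset.sum_filter]
        refine Finset.sum_nbij' (·ᶜ) (·ᶜ) (fun s hs => ?_) (fun s hs => ?_) (by simp) (by simp)
          (by simp)
        · simpa using hs
        · simpa using Finset.subset_compl_comm.1 (Finset.mem_powerset.1 hs)
    _ = if t = .univ then 1 else 0 := by
        simp only [Finset.sum_powerset_neg_one_pow_card, Finset.compl_eq_empty_iff]

theorem sum_perm_eq_sum_finset_of_multilinearMap {R V F ι : Type*} [CommSemiring R]
    [AddCommMonoid V] [Module R V] [AddCommGroup F] [Module R F] [Fintype ι]
    (T : MultilinearMap R (fun _ : ι => V) F) (v : ι → V) :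
    ∑ σ : Equiv.Perm ι, T (v ∘ σ) =
      ∑ s : Finset ι, (-1 : ℤ) ^ sᶜ.card • T (fun _ => ∑ i ∈ s, v i) := by
  have hexpand (s : Finset ι) : T (fun _ => ∑ i ∈ s, v i) =
      ∑ r : ι → ι, if Finset.univ.image r ⊆ s then T (v ∘ r) else 0 := by
    rw [T.map_sum_finset (fun _ => v) (fun _ => s), ← Finset.sum_filter]
    refine Finset.sum_congr ?_ fun _ _ => rfl
    ext r
    simp [Fintype.mem_piFinset, Finset.image_subset_iff]
  have hcoeff (r : ι → ι) : ∑ s : Finset ι, (-1 : ℤ) ^ sᶜ.card •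
      (if Finset.univ.image r ⊆ s then T (v ∘ r) else 0) =
      if Finset.univ.image r = .univ then T (v ∘ r) else 0 := by
    simp only [smul_ite, smul_zero, ← ite_zero_smul, ← Finset.sum_smul]
    rw [sum_neg_one_pow_card_compl_of_subset, ite_zero_smul, one_smul]
  simp only [hexpand, Finset.smul_sum]
  rw [Finset.sum_comm, Finset.sum_congr rfl fun r _ => hcoeff r]
  refine Fintype.sum_of_injective DFunLike.coe DFunLike.coe_injective _ _ (fun r hr => ?_)
    fun σ => ?_
  · refine if_neg fun h => hr ?_
    have hsurj : Function.Surjective r := fun i => by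
      simpa using h.ge (Finset.mem_univ i)
    exact ⟨.ofBijective r (Finite.surjective_iff_bijective.1 hsurj), rfl⟩
  · rw [if_pos (Finset.image_univ_of_surjective σ.surjective)]

variable {V F : Type*} [NormedAddCommGroup V] [NormedSpace ℝ V] [NormedAddCommGroup F]
  [NormedSpace ℝ F] {n : ℕ} {T : ContinuousMultilinearMap ℝ (fun _ : Fin n => V) F} {C : ℝ}

theorem factorial_mul_norm_le_of_diagonal
    (hT : ∀ (v : Fin n → V) (σ : Equiv.Perm (Fin n)), T (v ∘ σ) = T v)
    (h : ∀ y, ‖y‖ ≤ 1 → ‖T fun _ => y‖ ≤ C) {v : Fin n → V} (hv : ∑ i, ‖v i‖ ≤ 1) :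
    n.factorial * ‖T v‖ ≤ 2 ^ n * C := by
  have hpol := sum_perm_eq_sum_finset_of_multilinearMap T.toMultilinearMap v
  simp only [ContinuousMultilinearMap.coe_coe, hT, Finset.sum_const, Finset.card_univ,
    Fintype.card_perm, Fintype.card_fin] at hpol
  calc n.factorial * ‖T v‖ = ‖n.factorial • T v‖ := by
        rw [← Nat.cast_smul_eq_nsmul ℝ, norm_smul, Real.norm_natCast]
    _ ≤ ∑ _ : Finset (Fin n), C := by
        rw [hpol]
        refine norm_sum_le_of_le _ fun _ _ => ?_
        rw [← Int.cast_smul_eq_zsmul ℝ, norm_smul, Int.cast_pow, norm_pow]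
        simp only [Int.cast_neg, Int.cast_one, norm_neg, norm_one, one_pow, one_mul]
        exact h _ <| (norm_sum_le _ _).trans <|
          (Finset.sum_le_univ_sum_of_nonneg fun i => norm_nonneg _).trans hv
    _ = 2 ^ n * C := by simp

theorem norm_le_of_diagonal (hT : ∀ (v : Fin n → V) (σ : Equiv.Perm (Fin n)), T (v ∘ σ) = T v)
    (h : ∀ y, ‖y‖ ≤ 1 → ‖T fun _ => y‖ ≤ C) : ‖T‖ ≤ (2 * Real.exp 1) ^ n * C := by
  have hC : 0 ≤ C := (norm_nonneg _).trans (h 0 (by simp))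
  refine T.opNorm_le_bound (by positivity) fun v => ?_
  set u : Fin n → V := fun i => (n * ‖v i‖)⁻¹ • v i
  have hn (i : Fin n) : (n : ℝ) ≠ 0 := Nat.cast_ne_zero.2 i.pos.ne'
  have hvu : v = fun i => (n * ‖v i‖) • u i := by
    ext i
    rcases eq_or_ne (v i) 0 with hi | hi
    · simp [hi]
    · exact (smul_inv_smul₀ (mul_ne_zero (hn i) (norm_ne_zero_iff.2 hi)) _).symm
  have hu : ∑ i, ‖u i‖ ≤ 1 := by
    have hui (i : Fin n) : ‖u i‖ ≤ (n : ℝ)⁻¹ := by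
      rw [norm_smul, norm_inv, norm_mul, norm_norm, Real.norm_natCast, mul_inv, mul_assoc]
      exact mul_le_of_le_one_right (by positivity) inv_mul_le_one
    refine (Finset.sum_le_sum fun i _ => hui i).trans ?_
    simpa using mul_inv_le_one
  have hfac : (n : ℝ) ^ n ≤ Real.exp 1 ^ n * n.factorial := by
    rw [← Real.exp_nat_mul, mul_one, ← div_le_iff₀ (by positivity)]
    exact Real.pow_div_factorial_le_exp n n.cast_nonneg n
  have hTu : (n : ℝ) ^ n * ‖T u‖ ≤ (2 * Real.exp 1) ^ n * C :=
    calc (n : ℝ) ^ n * ‖T u‖ ≤ Real.exp 1 ^ n * (n.factorial * ‖T u‖) := by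
          rw [← mul_assoc]
          exact mul_le_mul_of_nonneg_right hfac (norm_nonneg _)
      _ ≤ Real.exp 1 ^ n * (2 ^ n * C) := by
          exact mul_le_mul_of_nonneg_left (factorial_mul_norm_le_of_diagonal hT h hu)
            (by positivity)
      _ = (2 * Real.exp 1) ^ n * C := by ring
  calc ‖T v‖ = (n : ℝ) ^ n * ‖T u‖ * ∏ i, ‖v i‖ := by
        conv_lhs => rw [hvu, T.map_smul_univ, norm_smul, Finset.prod_mul_distrib]
        rw [Finset.prod_const, Finset.card_univ, Fintype.card_fin,
          Real.norm_of_nonneg (by positivity)]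
        ring
    _ ≤ (2 * Real.exp 1) ^ n * C * ∏ i, ‖v i‖ := by gcongr

end Polarization
section Cauchy

variable {V F : Type*} [NormedAddCommGroup V] [NormedSpace ℝ V] [NormedAddCommGroup F]
  [NormedSpace ℝ F] {f : V → F} {p y : V} {B M : ℝ}

theorem norm_iteratedFDeriv_iteratedFDeriv (f : V → F) (x : V) (m n : ℕ) :
    ‖iteratedFDeriv ℝ m (iteratedFDeriv ℝ n f) x‖ = ‖iteratedFDeriv ℝ (m + n) f x‖ := by
  induction n generalizing m with
  | zero =>
    rw [iteratedFDeriv_zero_eq_comp, LinearIsometryEquiv.norm_iteratedFDeriv_comp_left, add_zero]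
  | succ n ih =>
    have hcurry := LinearIsometryEquiv.norm_iteratedFDeriv_comp_left (𝕜 := ℝ)
      (G := ContinuousMultilinearMap ℝ (fun _ : Fin (n + 1) => V) F)
      (continuousMultilinearCurryLeftEquiv ℝ (fun _ : Fin (n + 1) => V) F).symm
      (fderiv ℝ (iteratedFDeriv ℝ n f)) x m
    refine hcurry.trans ?_
    rw [norm_iteratedFDeriv_fderiv, ih, add_right_comm, add_assoc]

theorem iteratedDeriv_comp_line (hf : ContDiff ℝ ∞ f) (p y : V) (n : ℕ) (t : ℝ) :
    iteratedDeriv n (fun s : ℝ => f (p + s • y)) t =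
      iteratedFDeriv ℝ n f (p + t • y) fun _ => y := by
  induction n generalizing t with
  | zero => simp
  | succ n ih =>
    rw [iteratedDeriv_succ, funext ih]
    exact (contDiff_infty.1 hf (n + 1)).contDiffAt.deriv_fderiv_add_smul

/-- The Taylor series of `f` at `p`, as a formal multilinear series. -/
def multilinearTaylorSeries (f : V → F) (p : V) : FormalMultilinearSeries ℝ V F :=
  fun n => (n.factorial : ℝ)⁻¹ • iteratedFDeriv ℝ n f p

theorem norm_multilinearTaylorSeries_le {n : ℕ} {C : ℝ}
    (h : ‖iteratedFDeriv ℝ n f p‖ ≤ n.factorial * C) : ‖multilinearTaylorSeries f p n‖ ≤ C := by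
  rw [multilinearTaylorSeries, norm_smul, norm_inv, Real.norm_natCast,
    inv_mul_le_iff₀ (by positivity)]
  exact h

variable [CompleteSpace F]

theorem hasFPowerSeriesOnBall_multilinearTaylorSeries (hf : AnalyticOnNhd ℝ f .univ)
    (hr : 0 < (multilinearTaylorSeries f p).radius) :
    HasFPowerSeriesOnBall f (multilinearTaylorSeries f p) p
      (multilinearTaylorSeries f p).radius := by
  set P := multilinearTaylorSeries f p
  have hsum : HasFPowerSeriesOnBall (fun z => P.sum (z - p)) P p P.radius := by
    simpa using (P.hasFPowerSeriesOnBall hr).comp_sub p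
  refine hsum.congr <| hsum.analyticOnNhd.eqOn_of_preconnected_of_eventuallyEq
    (hf.mono (Set.subset_univ _)) Metric.isPreconnected_eball (Metric.mem_eball_self hr) ?_
  obtain ⟨Q, r, hQ⟩ := hf p (Set.mem_univ p)
  filter_upwards [Metric.eball_mem_nhds p hQ.r_pos, Metric.eball_mem_nhds p hr] with z hzQ hzP
  have hfz := hQ.hasSum_iteratedFDeriv (y := z - p) (by simpa [edist_eq_enorm_sub] using hzQ)
  have hPz := hsum.hasSum (y := z - p) (by simpa [edist_eq_enorm_sub] using hzP)
  rw [add_sub_cancel] at hfz hPz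
  exact hPz.unique hfz

theorem norm_apply_add_le_of_norm_iteratedFDeriv_le (hf : AnalyticOnNhd ℝ f .univ) (hB : 0 < B)
    (h : ∀ n, ‖iteratedFDeriv ℝ n f p‖ ≤ n.factorial * (B ^ n * M)) (hy : ‖y‖ < B⁻¹) :
    ‖f (p + y)‖ ≤ M * (1 - B * ‖y‖)⁻¹ := by
  set P := multilinearTaylorSeries f p
  have hP (n) : ‖P n‖ ≤ B ^ n * M := norm_multilinearTaylorSeries_le (h n)
  have hrad : ENNReal.ofReal B⁻¹ ≤ P.radius := P.le_radius_of_bound M fun n => by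
    rw [Real.coe_toNNReal _ (by positivity), inv_pow, ← div_eq_mul_inv,
      div_le_iff₀' (by positivity)]
    exact hP n
  have hyr : ‖y‖ₑ < P.radius := by
    refine lt_of_lt_of_le ?_ hrad
    rwa [← ofReal_norm, ENNReal.ofReal_lt_ofReal_iff (by positivity)]
  have hsum := (hasFPowerSeriesOnBall_multilinearTaylorSeries hf (pos_of_gt hyr)).hasSum
    (y := y) (by simpa using hyr)
  have hBy : B * ‖y‖ < 1 := (lt_inv_mul_iff₀ hB).1 (by rwa [mul_one])
  refine hsum.tsum_eq ▸ tsum_of_norm_bounded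
    ((hasSum_geometric_of_lt_one (by positivity) hBy).mul_left M) fun n => ?_
  calc ‖P n fun _ => y‖ ≤ ‖P n‖ * ‖y‖ ^ n := by
        simpa using (P n).le_opNorm fun _ => y
    _ ≤ B ^ n * M * ‖y‖ ^ n := by
        gcongr
        exact hP n
    _ = M * (B * ‖y‖) ^ n := by ring

theorem norm_iteratedFDeriv_add_le_of_norm_iteratedFDeriv_le (hf : AnalyticOnNhd ℝ f .univ)
    (hB : 0 < B) (h : ∀ n, ‖iteratedFDeriv ℝ n f p‖ ≤ n.factorial * (B ^ n * M))
    (hy : ‖y‖ ≤ (4 * B)⁻¹) (N : ℕ) :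
    ‖iteratedFDeriv ℝ N f (p + y)‖ ≤ N.factorial * (2 * B) ^ N * M * 2 := by
  have hM : 0 ≤ M := by simpa using (norm_nonneg _).trans (h 0)
  have hderiv (n) : ‖iteratedFDeriv ℝ n (iteratedFDeriv ℝ N f) p‖ ≤
      n.factorial * ((2 * B) ^ n * (N.factorial * (2 * B) ^ N * M)) := by
    have hfac : ((n + N).factorial : ℝ) ≤ 2 ^ (n + N) * n.factorial * N.factorial := by
      rw [← Nat.add_choose_mul_factorial_mul_factorial]
      push_cast
      gcongr
      exact_mod_cast Nat.choose_le_two_pow (n + N) N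
    rw [norm_iteratedFDeriv_iteratedFDeriv]
    refine (h (n + N)).trans ((mul_le_mul_of_nonneg_right hfac (by positivity)).trans_eq ?_)
    ring
  have hBy : 2 * B * ‖y‖ ≤ 2⁻¹ := by
    calc 2 * B * ‖y‖ ≤ 2 * B * (4 * B)⁻¹ := by gcongr
      _ = 2⁻¹ := by field_simp; norm_num
  have hy' : ‖y‖ < (2 * B)⁻¹ := hy.trans_lt (inv_strictAnti₀ (by positivity) (by linarith))
  refine (norm_apply_add_le_of_norm_iteratedFDeriv_le (hf.iteratedFDeriv N) (by positivity)
    hderiv hy').trans ?_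
  gcongr
  exact (inv_anti₀ (by norm_num) (by linarith : (2 : ℝ)⁻¹ ≤ _)).trans_eq (inv_inv 2)

theorem norm_iteratedFDeriv_add_le_of_diagonal {A : ℝ} (hf : AnalyticOnNhd ℝ f .univ) (hA : 0 < A)
    (h : ∀ n, ∀ y, ‖y‖ ≤ 1 → ‖iteratedFDeriv ℝ n f p fun _ => y‖ ≤ n.factorial * (A ^ n * M))
    (hy : ‖y‖ ≤ (8 * Real.exp 1 * A)⁻¹) (N : ℕ) :
    ‖iteratedFDeriv ℝ N f (p + y)‖ ≤ N.factorial * (4 * Real.exp 1 * A) ^ N * M * 2 := by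
  have hω : ContDiffAt ℝ ω f p := (hf p (Set.mem_univ p)).contDiffAt
  have hp (n) : ‖iteratedFDeriv ℝ n f p‖ ≤ n.factorial * ((2 * Real.exp 1 * A) ^ n * M) := by
    refine (norm_le_of_diagonal (fun v σ => hω.iteratedFDeriv_comp_perm v σ) (h n)).trans_eq ?_
    ring
  refine (norm_iteratedFDeriv_add_le_of_norm_iteratedFDeriv_le hf (by positivity) hp ?_ N).trans_eq
    (by ring)
  convert hy using 2
  ring

end Cauchy

section AdaptedPoint

variable {V ι : Type*} [NormedAddCommGroup V] [NormedSpace ℝ V] [Finite ι]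

theorem exists_common_zero_near (ℓ : ι → Module.Dual ℝ V) : ∃ U > 0, ∀ x β, ∃ x',
    ‖x - x'‖ ≤ U * |ℓ β x| ∧ ℓ β x' = 0 ∧ ∀ α, ℓ α x = 0 → ℓ α x' = 0 := by
  let IsDual (q : Set ι × ι) (v : V) : Prop := (∀ α ∈ q.1, ℓ α v = 0) ∧ ℓ q.2 v = 1
  have hbound (q) : ∃ u : ℝ, (∃ v, IsDual q v) → ∃ v, IsDual q v ∧ ‖v‖ ≤ u := by
    by_cases h : ∃ v, IsDual q v
    · obtain ⟨v, hv⟩ := h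
      exact ⟨‖v‖, fun _ => ⟨v, hv, le_rfl⟩⟩
    · exact ⟨0, fun h' => absurd h' h⟩
  choose u hu using hbound
  obtain ⟨U, hU⟩ := (Set.finite_range u).bddAbove
  refine ⟨max U 1, by positivity, fun x β => ?_⟩
  rcases eq_or_ne (ℓ β x) 0 with hβ | hβ
  · exact ⟨x, by simp [hβ], hβ, fun _ => id⟩
  obtain ⟨v, ⟨hvZ, hvβ⟩, hv⟩ := hu ({α | ℓ α x = 0}, β) ⟨(ℓ β x)⁻¹ • x, fun α hα => by
    rw [map_smul, hα, smul_zero], by rw [map_smul, smul_eq_mul, inv_mul_cancel₀ hβ]⟩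
  refine ⟨x - ℓ β x • v, ?_, by simp [hvβ], fun α hα => by simp [hα, hvZ α hα]⟩
  rw [sub_sub_cancel, norm_smul, Real.norm_eq_abs, mul_comm]
  gcongr
  exact hv.trans ((hU ⟨_, rfl⟩).trans (le_max_left U 1))

theorem exists_adapted_point (ℓ : ι → Module.Dual ℝ V) {ε : ℝ} (hε : 0 < ε) :
    ∃ c > 0, ∀ δ > 0, ∀ x, ∃ p d, c * δ ≤ d ∧ d ≤ δ ∧ ‖x - p‖ ≤ ε * d ∧
      ∀ β, ℓ β p = 0 ∨ d ≤ |ℓ β p| := by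
  obtain ⟨U, hU, hproj⟩ := exists_common_zero_near ℓ
  suffices ∀ n : ℕ, ∀ ε > 0, ∃ c > 0, c ≤ 1 ∧ ∀ δ > 0, ∀ x, {β | ℓ β x ≠ 0}.ncard ≤ n →
      ∃ p d, c * δ ≤ d ∧ d ≤ δ ∧ ‖x - p‖ ≤ ε * d ∧ ∀ β, ℓ β p = 0 ∨ d ≤ |ℓ β p| by
    obtain ⟨c, hc, -, h⟩ := this (Nat.card ι) ε hε
    exact ⟨c, hc, fun δ hδ x => h δ hδ x (Set.ncard_le_card _)⟩
  intro n
  induction n with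
  | zero =>
    refine fun ε hε => ⟨1, one_pos, le_rfl, fun δ hδ x hx => ⟨x, δ, by simp, le_rfl, ?_, ?_⟩⟩
    · simpa using by positivity
    · rw [Nat.le_zero, Set.ncard_eq_zero, Set.eq_empty_iff_forall_notMem] at hx
      exact fun β => .inl (not_not.1 (hx β))
  | succ n ih =>
    intro ε hε
    obtain ⟨c', hc', hc'1, h'⟩ := ih (ε / 2) (half_pos hε)
    set c := min c' (ε * c' / (2 * U))
    have hc : 0 < c := by positivity
    have hc1 : c ≤ 1 := (min_le_left _ _).trans hc'1
    refine ⟨c, hc, hc1, fun δ hδ x hx => ?_⟩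
    by_cases hall : ∀ β, ℓ β x = 0 ∨ c * δ ≤ |ℓ β x|
    · exact ⟨x, c * δ, le_rfl, mul_le_of_le_one_left hδ.le hc1, by simpa using by positivity, hall⟩
    push Not at hall
    obtain ⟨β, hβ, hβc⟩ := hall
    obtain ⟨x', hxx', hβx', hzero⟩ := hproj x β
    have hlt : {α | ℓ α x' ≠ 0}.ncard < {α | ℓ α x ≠ 0}.ncard :=
      Set.ncard_lt_ncard ⟨fun α hα hαx => hα (hzero α hαx), fun hsub => hsub hβ hβx'⟩
    obtain ⟨p, d, hd, hdδ, hp, hR⟩ := h' δ hδ x' (by lia)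
    refine ⟨p, d, (mul_le_mul_of_nonneg_right (min_le_left _ _) hδ.le).trans hd, hdδ, ?_, hR⟩
    have hstep : ‖x - x'‖ ≤ ε / 2 * d := by
      calc ‖x - x'‖ ≤ U * (ε * c' / (2 * U) * δ) := by
            refine hxx'.trans (mul_le_mul_of_nonneg_left ?_ hU.le)
            exact hβc.le.trans (mul_le_mul_of_nonneg_right (min_le_right _ _) hδ.le)
        _ = ε / 2 * (c' * δ) := by field_simp
        _ ≤ ε / 2 * d := by gcongr
    linarith [norm_sub_le_norm_sub_add_norm_sub x x' p]

end AdaptedPoint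

section Reflections

variable {V : Type*} [NormedAddCommGroup V] [InnerProductSpace ℝ V] {D : HOData V} {α : V}

theorem rRefl_eq_reflection (α x : V) : rRefl α x = (ℝ ∙ α)ᗮ.reflection x := by
  rw [Submodule.reflection_orthogonal_apply, Submodule.reflection_singleton_apply, rRefl, coroot,
    real_inner_smul_left, real_inner_self_eq_norm_sq, neg_sub, two_smul, ← add_smul]
  congr 2
  simp only [RCLike.ofReal_real_eq_id, id_eq]
  ring

theorem rRefl_rRefl (α x : V) : rRefl α (rRefl α x) = x := by
  simp only [rRefl_eq_reflection, Submodule.reflection_reflection]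

theorem continuous_rRefl (α : V) : Continuous (rRefl α) := by
  simpa only [funext (rRefl_eq_reflection α)] using (ℝ ∙ α)ᗮ.reflection.continuous

theorem inner_rRefl (hα : α ≠ 0) (x : V) : ⟪α, rRefl α x⟫ = -⟪α, x⟫ := by
  have : ⟪α, α⟫ ≠ 0 := inner_self_ne_zero.2 hα
  rw [rRefl, coroot, inner_sub_right, real_inner_smul_right, real_inner_smul_left]
  field_simp
  ring

/-- The reflection in the root `α` as an element of the Weyl group; the identity if `α` is not a
root. -/
def weylReflection (D : HOData V) (α : V) : weylGroup D :=
  if h : α ∈ D.R then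
    ⟨(ℝ ∙ α)ᗮ.reflection, Subgroup.subset_closure ⟨α, h, fun x => (rRefl_eq_reflection α x).symm⟩⟩
  else 1

theorem weylReflection_mul_apply (hα : α ∈ D.R) (w : weylGroup D) (x : V) :
    (weylReflection D α * w).1 x = rRefl α (w.1 x) := by
  rw [weylReflection, dif_pos hα, rRefl_eq_reflection]
  rfl

theorem weylGroup_apply_mem (w : weylGroup D) (hα : α ∈ D.R) : w.1 α ∈ D.R := by
  obtain ⟨w, hw⟩ := w
  induction hw using Subgroup.closure_induction generalizing α with
  | mem w hw =>
    obtain ⟨β, hβ, hwβ⟩ := hw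
    exact hwβ α ▸ D.refl_mem β hβ α hα
  | one => exact hα
  | mul _ _ _ _ hv hw => exact hv (hw hα)
  | inv w _ hw =>
    have hsurj := Finset.surjOn_of_injOn_of_card_le w (fun α hα => hw hα) w.injective.injOn le_rfl
    obtain ⟨β, hβ, rfl⟩ := hsurj hα
    exact (w.symm_apply_apply β).symm ▸ hβ

theorem inner_weylGroup_apply (w : weylGroup D) (x y : V) : ⟪x, w.1 y⟫ = ⟪(w⁻¹).1 x, y⟫ := by
  rw [← w.1.inner_map_map _ y]
  exact congrArg (⟪·, w.1 y⟫) (w.1.apply_symm_apply x).symm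

theorem HORegular.weylGroup_apply {x : V} (hx : HORegular D x) (w : weylGroup D) :
    HORegular D (w.1 x) := fun α hα => by
  rw [inner_weylGroup_apply]
  exact hx _ (weylGroup_apply_mem w⁻¹ hα)

theorem eventually_inner_line_eq_zero_imp (D : HOData V) (x y : V) :
    ∀ᶠ t : ℝ in 𝓝[≠] 0, ∀ α ∈ D.R, ⟪α, x + t • y⟫ = 0 → ⟪α, y⟫ = 0 := by
  refine (Filter.eventually_all_finset D.R).2 fun α _ => ?_
  by_cases hy : ⟪α, y⟫ = 0
  · exact .of_forall fun _ _ => hy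
  have hderiv : HasDerivAt (fun t : ℝ => ⟪α, x⟫ + t * ⟪α, y⟫) ⟪α, y⟫ 0 := by
    simpa using ((hasDerivAt_id (0 : ℝ)).mul_const ⟪α, y⟫).const_add ⟪α, x⟫
  filter_upwards [hderiv.eventually_ne hy (c := 0)] with t ht h0
  rw [inner_add_right, real_inner_smul_right] at h0
  exact absurd h0 ht

theorem dense_setOf_regular (D : HOData V) : Dense {x | HORegular D x} := by
  intro x
  obtain ⟨u, hu⟩ := D.pos_char
  have hu0 : ∀ α ∈ D.R, ⟪α, u⟫ ≠ 0 := fun α hα h0 => by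
    rcases D.pos_or_neg α hα with h | h
    · exact absurd ((hu α hα).1 h) (by simp [h0])
    · exact absurd ((hu _ (D.neg_mem α hα)).1 h) (by simp [h0])
  have hlim : Filter.Tendsto (fun t : ℝ => x + t • u) (𝓝[≠] 0) (𝓝 x) := by
    have hcont : Continuous fun t : ℝ => x + t • u := by fun_prop
    simpa using (hcont.tendsto 0).mono_left nhdsWithin_le_nhds
  exact mem_closure_of_tendsto hlim <|
    (eventually_inner_line_eq_zero_imp D x u).mono fun t ht α hα h0 => hu0 α hα (ht α hα h0)

theorem eq_of_eq_on_regular {F : Type*} [TopologicalSpace F] [T2Space F] {f g : V → F} {x : V}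
    (hf : ContinuousAt f x) (hg : ContinuousAt g x) (h : ∀ y, HORegular D y → f y = g y) :
    f x = g x := by
  have := mem_closure_iff_nhdsWithin_neBot.1 (dense_setOf_regular D x)
  exact tendsto_nhds_unique (l := 𝓝[{y | HORegular D y}] x) (hf.mono_left nhdsWithin_le_nhds)
    ((hg.mono_left nhdsWithin_le_nhds).congr'
      (eventually_mem_nhdsWithin.mono fun y hy => (h y hy).symm))

end Reflections

section WeylMaximum

variable {V : Type*} [NormedAddCommGroup V] [InnerProductSpace ℝ V] (D : HOData V)
  [Fintype (weylGroup D)] (w : weylGroup D) (l x : V)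

theorem inner_weylGroup_apply_left_le_maxW : ⟪w.1 l, x⟫ ≤ maxW D l x :=
  le_ciSup (f := fun w : weylGroup D => ⟪w.1 l, x⟫) (Set.finite_range _).bddAbove w

theorem inner_weylGroup_apply_le_maxW : ⟪l, w.1 x⟫ ≤ maxW D l x :=
  (inner_weylGroup_apply w l x).trans_le (inner_weylGroup_apply_left_le_maxW D w⁻¹ l x)

theorem maxW_weylGroup_apply : maxW D l (w.1 x) = maxW D l x :=
  (iSup_congr fun v : weylGroup D => inner_weylGroup_apply w (v.1 l) x).trans
    ((Equiv.mulLeft w⁻¹).iSup_comp (g := fun v : weylGroup D => ⟪v.1 l, x⟫))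

theorem maxW_le_add (p : V) : maxW D l p ≤ maxW D l x + ‖l‖ * ‖x - p‖ := by
  refine ciSup_le fun w => ?_
  have hdiff : ⟪w.1 l, p - x⟫ ≤ ‖l‖ * ‖x - p‖ := by
    refine (real_inner_le_norm _ _).trans_eq ?_
    rw [w.1.norm_map, norm_sub_rev]
  rw [inner_sub_right] at hdiff
  linarith [inner_weylGroup_apply_left_le_maxW D w l x]

end WeylMaximum

section Cherednik

variable {V 𝕜 : Type*} [NormedAddCommGroup V] [InnerProductSpace ℝ V] [RCLike 𝕜]
  {D : HOData V} {α ξ x : V} {μ : V → 𝕜} {G : V → 𝕜}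

/-- The coefficient of `G (r_α x) - G x` in the Cherednik equation for `∂_ξ G`; it has a pole on
the hyperplane `α^⊥` unless `ξ` is tangent to it. -/
def cherednikCoeff (D : HOData V) (α ξ x : V) : ℝ :=
  D.k α * ⟪α, ξ⟫ / (1 - Real.exp (-⟪α, x⟫))

theorem continuousAt_cherednikCoeff (D : HOData V) (h : ⟪α, x⟫ = 0 → ⟪α, ξ⟫ = 0) :
    ContinuousAt (cherednikCoeff D α ξ) x := by
  unfold cherednikCoeff
  by_cases hξ : ⟪α, ξ⟫ = 0
  · simp only [hξ, mul_zero, zero_div]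
    exact continuousAt_const
  · have hden : 1 - Real.exp (-⟪α, x⟫) ≠ 0 :=
      sub_ne_zero.2 (Ne.symm (by simpa using mt h hξ))
    exact continuousAt_const.div (by fun_prop) hden

theorem cherednikCoeff_smul_self_nonneg (hα : α ∈ D.R) {t : ℝ} (ht : 0 ≤ t) :
    0 ≤ cherednikCoeff D α ξ (t • ξ) := by
  have hk := (D.k_pos α hα).le
  rw [cherednikCoeff, real_inner_smul_right]
  rcases le_total 0 ⟪α, ξ⟫ with hξ | hξ
  · exact div_nonneg (mul_nonneg hk hξ) (sub_nonneg.2 (Real.exp_le_one_iff.2 (by nlinarith)))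
  · exact div_nonneg_of_nonpos (mul_nonpos_of_nonneg_of_nonpos hk hξ)
      (sub_nonpos.2 (Real.one_le_exp (by nlinarith)))

theorem cherednikCoeff_rRefl (D : HOData V) (hα : α ≠ 0) (hx : ⟪α, x⟫ ≠ 0) (ξ : V) :
    cherednikCoeff D α (rRefl α ξ) (rRefl α x) =
      cherednikCoeff D α ξ x - D.k α * ⟪α, ξ⟫ := by
  have hexp : 1 - Real.exp ⟪α, x⟫ ≠ 0 := sub_ne_zero.2 (Ne.symm (by simpa using hx))
  have hexp' : Real.exp ⟪α, x⟫ - 1 ≠ 0 := sub_ne_zero.2 (by simpa using hx)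
  rw [cherednikCoeff, cherednikCoeff, inner_rRefl hα, inner_rRefl hα, neg_neg, Real.exp_neg]
  field_simp
  ring

/-- A real-analytic solution `G` of the Cherednik system, normalized by `G 0 = 1`. The multiplier
`μ ξ` stands for `(ρ + λ, ξ)`, so real and complex spectral parameters are treated alike. -/
structure IsCherednikSolution (D : HOData V) (μ G : V → 𝕜) : Prop where
  analyticOnNhd : AnalyticOnNhd ℝ G .univ
  map_zero : G 0 = 1
  fderiv_of_regular : ∀ ξ x, HORegular D x → fderiv ℝ G x ξ =
    ∑ α ∈ D.Rpos, cherednikCoeff D α ξ x • (G (rRefl α x) - G x) + μ ξ * G x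

namespace IsCherednikSolution

theorem differentiable (hG : IsCherednikSolution D μ G) : Differentiable ℝ G := fun x =>
  (hG.analyticOnNhd x trivial).differentiableAt

theorem continuous_fderiv_apply (hG : IsCherednikSolution D μ G) (ξ : V) :
    Continuous fun x => fderiv ℝ G x ξ :=
  (hG.analyticOnNhd.contDiff.continuous_fderiv one_ne_zero).clm_apply continuous_const

theorem fderiv_of_tangent (hG : IsCherednikSolution D μ G)
    (hx : ∀ α ∈ D.R, ⟪α, x⟫ = 0 → ⟪α, ξ⟫ = 0) : fderiv ℝ G x ξ =
      ∑ α ∈ D.Rpos, cherednikCoeff D α ξ x • (G (rRefl α x) - G x) + μ ξ * G x := by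
  have hGc := hG.differentiable.continuous
  refine eq_of_eq_on_regular (D := D) (hG.continuous_fderiv_apply ξ).continuousAt ?_
    (hG.fderiv_of_regular ξ)
  refine .add (tendsto_finsetSum _ fun α hα => ?_) (by fun_prop)
  exact (continuousAt_cherednikCoeff D (hx α (D.pos_subset hα))).smul
    ((hGc.comp (continuous_rRefl α)).sub hGc).continuousAt

theorem hasDerivAt_orbit (hG : IsCherednikSolution D μ G) {p y : V} {w : weylGroup D} {t : ℝ}
    (ht : ∀ α ∈ D.R, ⟪α, w.1 (p + t • y)⟫ = 0 → ⟪α, w.1 y⟫ = 0) :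
    HasDerivAt (fun t : ℝ => G (w.1 (p + t • y)))
      (∑ α ∈ D.Rpos, cherednikCoeff D α (w.1 y) (w.1 (p + t • y)) •
          (G ((weylReflection D α * w).1 (p + t • y)) - G (w.1 (p + t • y))) +
        μ (w.1 y) * G (w.1 (p + t • y))) t := by
  have hline : HasDerivAt (fun t : ℝ => w.1 (p + t • y)) (w.1 y) t :=
    w.1.toContinuousLinearEquiv.toContinuousLinearMap.hasFDerivAt.comp_hasDerivAt t <| by
      simpa using ((hasDerivAt_id t).smul_const y).const_add p
  refine ((hG.differentiable _).hasFDerivAt.comp_hasDerivAt t hline).congr_deriv ?_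
  rw [hG.fderiv_of_tangent ht]
  congr 1
  exact Finset.sum_congr rfl fun α hα => by rw [weylReflection_mul_apply (D.pos_subset hα)]

theorem norm_le_mul_exp [Finite (weylGroup D)] (hG : IsCherednikSolution D μ G) {ν G₀ : V → ℝ}
    (hG₀ : IsCherednikSolution D ν G₀) {m : ℝ} {x : V}
    (hμν : ∀ w : weylGroup D, RCLike.re (μ (w.1 x)) ≤ ν (w.1 x) + m) :
    ‖G x‖ ≤ G₀ x * Real.exp m := by
  have htangent : ∀ (w : weylGroup D) (t : ℝ), 0 < t → ∀ α ∈ D.R,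
      ⟪α, w.1 (0 + t • x)⟫ = 0 → ⟪α, w.1 x⟫ = 0 := fun w t ht α _ h0 => by
    rw [zero_add, map_smul, real_inner_smul_right] at h0
    exact (mul_eq_zero.1 h0).resolve_left ht.ne'
  have hline : ∀ w : weylGroup D, Continuous fun t : ℝ => w.1 (0 + t • x) := fun w =>
    w.1.continuous.comp (by fun_prop)
  have hexp : ∀ t, HasDerivAt (fun t => Real.exp (m * t)) (Real.exp (m * t) * m) t := fun t =>
    (hasDerivAt_const_mul m).exp
  have hle := norm_le_of_supersolution (s := D.Rpos) (σ := fun α w => weylReflection D α * w)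
    (b := fun α w t => cherednikCoeff D α (w.1 x) (w.1 (0 + t • x)))
    (Φ := fun w t => G (w.1 (0 + t • x)))
    (Ψ := fun w t => G₀ (w.1 (0 + t • x)) * Real.exp (m * t))
    (fun α hα w t ht => by
      rw [zero_add, map_smul]
      exact cherednikCoeff_smul_self_nonneg (D.pos_subset hα) ht.le)
    hμν (fun w => hG.differentiable.continuous.comp (hline w))
    (fun w => (hG₀.differentiable.continuous.comp (hline w)).mul (by fun_prop))
    (fun w t ht => hG.hasDerivAt_orbit (htangent w t ht))
    (fun w t ht => (hG₀.hasDerivAt_orbit (htangent w t ht)).mul (hexp t))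
    (fun w t _ => le_of_eq ?_) (fun w => ?_) 1 zero_le_one
  · simpa using hle
  · simp only [smul_eq_mul, add_mul, Finset.sum_mul, mul_assoc, sub_mul]
    ring
  · simp [hG.map_zero, hG₀.map_zero]

theorem nonneg [Finite (weylGroup D)] {ν G : V → ℝ} (hG : IsCherednikSolution D ν G) (x : V) :
    0 ≤ G x := by
  simpa using (norm_nonneg _).trans
    (hG.norm_le_mul_exp hG (m := 0) fun w : weylGroup D => by simp)

end IsCherednikSolution

end Cherednik

section Harnack

theorem norm_le_exp_mul_of_norm_fderiv_le {V F : Type*} [NormedAddCommGroup V] [NormedSpace ℝ V]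
    [NormedAddCommGroup F] [NormedSpace ℝ F] {f : V → F} {C : ℝ} (hf : Differentiable ℝ f)
    (h : ∀ x ξ, ‖fderiv ℝ f x ξ‖ ≤ C * ‖ξ‖ * ‖f x‖) (x y : V) :
    ‖f y‖ ≤ Real.exp (C * ‖y - x‖) * ‖f x‖ := by
  have hline (t : ℝ) : HasDerivAt (fun t : ℝ => f (x + t • (y - x)))
      (fderiv ℝ f (x + t • (y - x)) (y - x)) t :=
    (hf _).hasFDerivAt.comp_hasDerivAt t <| by
      simpa using ((hasDerivAt_id t).smul_const (y - x)).const_add x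
  have hgronwall := norm_le_gronwallBound_of_norm_deriv_right_le (a := 0) (b := 1) (δ := ‖f x‖)
    (K := C * ‖y - x‖) (ε := 0) (fun t _ => (hline t).continuousAt.continuousWithinAt)
    (fun t _ => (hline t).hasDerivWithinAt) (by simp)
    (fun t _ => (h _ _).trans_eq (add_zero _).symm) 1 (by simp)
  simpa [gronwallBound_ε0, mul_comm] using hgronwall

variable {V 𝕜 F : Type*} [NormedAddCommGroup V] [InnerProductSpace ℝ V] [RCLike 𝕜]
  [NormedAddCommGroup F] [NormedSpace ℝ F] {D : HOData V} {α x : V} [Fintype (weylGroup D)]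

theorem sum_cherednikCoeff_smul_sub (hα : α ∈ D.R) (hx : HORegular D x) (ξ : V) (g : V → F) :
    ∑ w : weylGroup D, cherednikCoeff D α (w.1 ξ) (w.1 x) • (g (rRefl α (w.1 x)) - g (w.1 x)) =
      -∑ w : weylGroup D, (D.k α * ⟪α, w.1 ξ⟫) • g (w.1 x) := by
  have hreindex : ∑ w : weylGroup D, cherednikCoeff D α (w.1 ξ) (w.1 x) • g (rRefl α (w.1 x)) =
      ∑ w : weylGroup D,
        cherednikCoeff D α (rRefl α (w.1 ξ)) (rRefl α (w.1 x)) • g (w.1 x) := by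
    rw [← Equiv.sum_comp (Equiv.mulLeft (weylReflection D α))]
    simp only [Equiv.coe_mulLeft, weylReflection_mul_apply hα, rRefl_rRefl]
  simp only [smul_sub, Finset.sum_sub_distrib, hreindex,
    cherednikCoeff_rRefl D (D.root_ne_zero α hα) (hx.weylGroup_apply _ α hα), sub_smul]
  abel

theorem sum_mul_inner_eq_two_mul_inner_rhoHO (D : HOData V) (ξ : V) :
    ∑ α ∈ D.Rpos, D.k α * ⟪α, ξ⟫ = 2 * ⟪rhoHO D, ξ⟫ := by
  simp [rhoHO, real_inner_smul_left, sum_inner]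

namespace IsCherednikSolution

theorem fderiv_sum_weylGroup {μ G : V → 𝕜} (hG : IsCherednikSolution D μ G) (ξ x : V) :
    fderiv ℝ (fun x => ∑ w : weylGroup D, G (w.1 x)) x ξ =
      ∑ w : weylGroup D, (μ (w.1 ξ) * G (w.1 x) - (2 * ⟪rhoHO D, w.1 ξ⟫) • G (w.1 x)) := by
  have hGw (w : weylGroup D) : Differentiable ℝ fun x => G (w.1 x) :=
    hG.differentiable.comp w.1.differentiable
  have hfderiv : ∀ x, fderiv ℝ (fun x => ∑ w : weylGroup D, G (w.1 x)) x ξ =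
      ∑ w : weylGroup D, fderiv ℝ G (w.1 x) (w.1 ξ) := fun x => by
    rw [fderiv_fun_sum fun w _ => (hGw w) x, sum_apply]
    exact Finset.sum_congr rfl fun w _ =>
      congrArg (· ξ) (w.1.toContinuousLinearEquiv.comp_right_fderiv (f := G) (x := x))
  have hleft : Continuous fun x => ∑ w : weylGroup D, fderiv ℝ G (w.1 x) (w.1 ξ) :=
    continuous_finsetSum _ fun w _ => (hG.continuous_fderiv_apply _).comp w.1.continuous
  have hright : Continuous fun x => ∑ w : weylGroup D,
      (μ (w.1 ξ) * G (w.1 x) - (2 * ⟪rhoHO D, w.1 ξ⟫) • G (w.1 x)) :=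
    continuous_finsetSum _ fun w _ =>
      ((hGw w).continuous.const_mul _).sub ((hGw w).continuous.const_smul _)
  refine (hfderiv x).trans <|
    eq_of_eq_on_regular (D := D) hleft.continuousAt hright.continuousAt fun x hx => ?_
  simp only [hG.fderiv_of_regular _ _ (hx.weylGroup_apply _)]
  rw [Finset.sum_add_distrib, Finset.sum_comm, Finset.sum_congr rfl fun α hα =>
      sum_cherednikCoeff_smul_sub (D.pos_subset hα) hx ξ G,
    Finset.sum_neg_distrib, Finset.sum_comm, Finset.sum_sub_distrib, neg_add_eq_sub]
  simp only [← Finset.sum_smul, sum_mul_inner_eq_two_mul_inner_rhoHO]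

theorem sum_weylGroup_le_exp_mul {G : V → ℝ}
    (hG : IsCherednikSolution D (fun ξ => ⟪rhoHO D, ξ⟫) G) (x p : V) :
    ∑ w : weylGroup D, G (w.1 p) ≤
      Real.exp (‖rhoHO D‖ * ‖p - x‖) * ∑ w : weylGroup D, G (w.1 x) := by
  have hnonneg (x : V) : 0 ≤ ∑ w : weylGroup D, G (w.1 x) :=
    Finset.sum_nonneg fun w _ => hG.nonneg _
  have hdiff : Differentiable ℝ fun x => ∑ w : weylGroup D, G (w.1 x) :=
    Differentiable.fun_sum fun w _ => hG.differentiable.comp w.1.differentiable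
  have hle := norm_le_exp_mul_of_norm_fderiv_le hdiff (C := ‖rhoHO D‖) (fun x ξ => ?_) x p
  · simpa only [Real.norm_of_nonneg (hnonneg _)] using hle
  rw [hG.fderiv_sum_weylGroup, Real.norm_of_nonneg (hnonneg x), Finset.mul_sum]
  refine norm_sum_le_of_le _ fun w _ => ?_
  have hinner := norm_inner_le_norm (𝕜 := ℝ) (rhoHO D) (w.1 ξ)
  rw [w.1.norm_map] at hinner
  calc ‖⟪rhoHO D, w.1 ξ⟫ * G (w.1 x) - (2 * ⟪rhoHO D, w.1 ξ⟫) • G (w.1 x)‖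
      = ‖⟪rhoHO D, w.1 ξ⟫‖ * G (w.1 x) := by
        rw [smul_eq_mul, ← sub_mul, norm_mul, Real.norm_of_nonneg (hG.nonneg _), two_mul,
          sub_add_cancel_left, norm_neg]
    _ ≤ ‖rhoHO D‖ * ‖ξ‖ * G (w.1 x) := by
        gcongr
        exact hG.nonneg _

end IsCherednikSolution

end Harnack

section DiagonalBounds

open PowerSeries

variable {V 𝕜 : Type*} [NormedAddCommGroup V] [InnerProductSpace ℝ V] [RCLike 𝕜]
  {D : HOData V} {α p y : V} {b d : ℝ} {μ G : V → 𝕜}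

theorem exists_analyticAt_cherednikCoeff_line (hα : α ∈ D.R) (hy : |⟪α, y⟫| ≤ b) (hd : 0 < d)
    (hp : ⟪α, p⟫ = 0 ∨ d ≤ |⟪α, p⟫|) :
    ∃ e : ℝ → ℝ, AnalyticAt ℝ e 0 ∧
      (∀ᶠ t in 𝓝[≠] 0, e t = t * cherednikCoeff D α y (p + t • y)) ∧ 0 ≤ e 0 ∧
      ∀ m, |coeff (m + 1) (taylorSeries e)| ≤
        D.k α * (b * (1 + d⁻¹)) * (b * (2 + d⁻¹)) ^ m := by
  have hk := (D.k_pos α hα).le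
  have hb := (abs_nonneg _).trans hy
  have hinv : |⟪α, p⟫|⁻¹ ≤ d⁻¹ := by
    rcases hp with h | h
    · simpa [h] using hd.le
    · exact inv_anti₀ hd h
  obtain ⟨e, he, heq, he0, hcoeff⟩ := exists_analyticAt_coupling ⟪α, p⟫ ⟪α, y⟫
  refine ⟨fun t => D.k α * e t, analyticAt_const.fun_mul he, ?_, mul_nonneg hk he0, fun m => ?_⟩
  · filter_upwards [heq] with t ht
    rw [ht, cherednikCoeff, inner_add_right, real_inner_smul_right]
    ring
  · rw [taylorSeries_const_mul _ he.contDiffAt, coeff_C_mul, abs_mul, abs_of_nonneg hk, mul_assoc]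
    refine mul_le_mul_of_nonneg_left ((hcoeff m).trans ?_) hk
    gcongr

theorem analyticAt_ofReal_comp {e : ℝ → ℝ} {t : ℝ} (he : AnalyticAt ℝ e t) :
    AnalyticAt ℝ (fun t => (e t : 𝕜)) t :=
  (RCLike.ofRealCLM (K := 𝕜)).analyticAt (e t) |>.comp he

namespace IsCherednikSolution

theorem analyticAt_orbit (hG : IsCherednikSolution D μ G) (p y : V) (w : weylGroup D) (t : ℝ) :
    AnalyticAt ℝ (fun t : ℝ => G (w.1 (p + t • y))) t := by
  have hline : AnalyticAt ℝ (fun t : ℝ => p + t • y) t := by fun_prop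
  exact (hG.analyticOnNhd _ trivial).comp
    ((w.1.toContinuousLinearEquiv.toContinuousLinearMap.analyticAt _).comp hline)

theorem mul_deriv_orbit_eventuallyEq (hG : IsCherednikSolution D μ G) (w : weylGroup D)
    {e : V → ℝ → ℝ} (he : ∀ α ∈ D.Rpos, AnalyticAt ℝ (e α) 0)
    (heq : ∀ α ∈ D.Rpos, ∀ᶠ t in 𝓝[≠] 0,
      e α t = t * cherednikCoeff D α (w.1 y) (w.1 p + t • w.1 y)) :
    (fun t => algebraMap ℝ 𝕜 t * deriv (fun t : ℝ => G (w.1 (p + t • y))) t) =ᶠ[𝓝 0] fun t =>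
      ∑ α ∈ D.Rpos, (e α t : 𝕜) *
          (G ((weylReflection D α * w).1 (p + t • y)) - G (w.1 (p + t • y))) +
        μ (w.1 y) * (algebraMap ℝ 𝕜 t * G (w.1 (p + t • y))) := by
  have hφ (v : weylGroup D) := hG.analyticAt_orbit p y v 0
  have hid : AnalyticAt ℝ (algebraMap ℝ 𝕜) 0 := (algebraMapCLM ℝ 𝕜).analyticAt 0
  have hrhs := (Finset.analyticAt_fun_sum D.Rpos fun α hα =>
    (analyticAt_ofReal_comp (𝕜 := 𝕜) (he α hα)).fun_mul
      ((hφ (weylReflection D α * w)).fun_sub (hφ w))).fun_add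
    ((analyticAt_const (v := μ (w.1 y))).fun_mul (hid.fun_mul (hφ w)))
  refine ((hid.fun_mul (hφ w).deriv).frequently_eq_iff_eventually_eq hrhs).1
    (Filter.Eventually.frequently ?_)
  filter_upwards [eventually_inner_line_eq_zero_imp D (w.1 p) (w.1 y),
    (Filter.eventually_all_finset D.Rpos).2 heq] with t ht het
  simp only [← map_smul, ← map_add] at ht het
  rw [(hG.hasDerivAt_orbit ht).deriv, mul_add, Finset.mul_sum, mul_left_comm]
  congr 1
  refine Finset.sum_congr rfl fun α hα => ?_
  rw [het α hα, RCLike.real_smul_eq_coe_mul, RCLike.ofReal_mul, mul_assoc]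

theorem X_mul_derivative_taylorSeries_orbit (hG : IsCherednikSolution D μ G) (w : weylGroup D)
    {e : V → ℝ → ℝ} (he : ∀ α ∈ D.Rpos, AnalyticAt ℝ (e α) 0)
    (heq : ∀ α ∈ D.Rpos, ∀ᶠ t in 𝓝[≠] 0,
      e α t = t * cherednikCoeff D α (w.1 y) (w.1 p + t • w.1 y)) :
    X * derivative 𝕜 (taylorSeries fun t : ℝ => G (w.1 (p + t • y))) =
      ∑ α ∈ D.Rpos, taylorSeries (fun t => (e α t : 𝕜)) *
          (taylorSeries (fun t : ℝ => G ((weylReflection D α * w).1 (p + t • y))) -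
            taylorSeries fun t : ℝ => G (w.1 (p + t • y))) +
        C (μ (w.1 y)) * (X * taylorSeries fun t : ℝ => G (w.1 (p + t • y))) := by
  have hφ (v : weylGroup D) := hG.analyticAt_orbit p y v 0
  have hid : AnalyticAt ℝ (algebraMap ℝ 𝕜) 0 := (algebraMapCLM ℝ 𝕜).analyticAt 0
  have he' (α) (hα : α ∈ D.Rpos) := analyticAt_ofReal_comp (𝕜 := 𝕜) (he α hα)
  have hterm (α) (hα : α ∈ D.Rpos) :=
    (he' α hα).fun_mul ((hφ (weylReflection D α * w)).fun_sub (hφ w))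
  have hmult := hid.fun_mul (hφ w)
  rw [← taylorSeries_deriv, ← taylorSeries_algebraMap_mul (hφ w).deriv.contDiffAt,
    taylorSeries_congr (hG.mul_deriv_orbit_eventuallyEq w he heq),
    taylorSeries_add (Finset.analyticAt_fun_sum _ hterm).contDiffAt
      (analyticAt_const.fun_mul hmult).contDiffAt,
    taylorSeries_sum fun α hα => (hterm α hα).contDiffAt,
    taylorSeries_const_mul _ hmult.contDiffAt, taylorSeries_algebraMap_mul (hφ w).contDiffAt]
  congr 1
  refine Finset.sum_congr rfl fun α hα => ?_
  rw [taylorSeries_mul (he' α hα).contDiffAt ((hφ _).fun_sub (hφ w)).contDiffAt,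
    taylorSeries_sub (hφ _).contDiffAt (hφ w).contDiffAt]

theorem norm_coeff_taylorSeries_line_le [Finite (weylGroup D)] (hG : IsCherednikSolution D μ G)
    {M M₀ L : ℝ} (hb : ∀ α ∈ D.R, ‖α‖ ≤ b) (hb₀ : 0 ≤ b) (hd : 0 < d)
    (hμ : ∀ ξ, ‖μ ξ‖ ≤ M * ‖ξ‖) (hM : 0 ≤ M)
    (hp : ∀ α ∈ D.R, ⟪α, p⟫ = 0 ∨ d ≤ |⟪α, p⟫|) (hM₀ : ∀ w : weylGroup D, ‖G (w.1 p)‖ ≤ M₀)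
    (hκL : b * (2 + d⁻¹) ≤ L)
    (hL : 2 * ∑ α ∈ D.Rpos, D.k α * (b * (1 + d⁻¹)) + M ≤ L) (hy : ‖y‖ ≤ 1) (n : ℕ) :
    ‖coeff n (taylorSeries fun t : ℝ => G (p + t • y))‖ ≤ L ^ n * M₀ := by
  have hwy : ∀ (w : weylGroup D), ∀ α ∈ D.R, |⟪α, w.1 y⟫| ≤ b := fun w α hα => by
    refine (abs_real_inner_le_norm _ _).trans ?_
    rw [w.1.norm_map]
    exact (mul_le_of_le_one_right (norm_nonneg _) hy).trans (hb α hα)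
  have hwp : ∀ (w : weylGroup D), ∀ α ∈ D.R, ⟪α, w.1 p⟫ = 0 ∨ d ≤ |⟪α, w.1 p⟫| :=
    fun w α hα => by
      rw [inner_weylGroup_apply]
      exact hp _ (weylGroup_apply_mem w⁻¹ hα)
  choose! e he heq he0 hecoeff using fun (w : weylGroup D) (α : V) (hα : α ∈ D.Rpos) =>
    exists_analyticAt_cherednikCoeff_line (D.pos_subset hα) (hwy w α (D.pos_subset hα)) hd
      (hwp w α (D.pos_subset hα))
  have hseries (w) (α) (hα : α ∈ D.Rpos) :=
    taylorSeries_ofReal (𝕜 := 𝕜) (he w α hα).contDiffAt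
  exact norm_coeff_le_of_fuchsian (s := D.Rpos) (σ := fun α w => weylReflection D α * w)
    (E := fun α w => taylorSeries fun t => (e w α t : 𝕜)) (e := fun α w => e w α 0)
    (H := fun α => D.k α * (b * (1 + d⁻¹))) (κ := b * (2 + d⁻¹)) (μ := fun w => μ (w.1 y))
    (f := fun w => taylorSeries fun t : ℝ => G (w.1 (p + t • y)))
    (fun α hα w => he0 w α hα) (by positivity) hκL hL
    (fun α _ w => by simp [coeff_zero_taylorSeries])
    (fun α hα w n => by
      rw [hseries w α hα, coeff_map, norm_algebraMap', Real.norm_eq_abs]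
      exact hecoeff w α hα n)
    (fun w => (hμ _).trans (by rw [w.1.norm_map]; exact mul_le_of_le_one_right hM hy))
    (fun w => by simpa [coeff_zero_taylorSeries] using hM₀ w)
    (fun w => hG.X_mul_derivative_taylorSeries_orbit w (he w) (heq w)) n 1

theorem norm_iteratedFDeriv_diagonal_le [Finite (weylGroup D)] (hG : IsCherednikSolution D μ G)
    {M M₀ L : ℝ} (hb : ∀ α ∈ D.R, ‖α‖ ≤ b) (hb₀ : 0 ≤ b) (hd : 0 < d)
    (hμ : ∀ ξ, ‖μ ξ‖ ≤ M * ‖ξ‖) (hM : 0 ≤ M)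
    (hp : ∀ α ∈ D.R, ⟪α, p⟫ = 0 ∨ d ≤ |⟪α, p⟫|) (hM₀ : ∀ w : weylGroup D, ‖G (w.1 p)‖ ≤ M₀)
    (hκL : b * (2 + d⁻¹) ≤ L)
    (hL : 2 * ∑ α ∈ D.Rpos, D.k α * (b * (1 + d⁻¹)) + M ≤ L) (hy : ‖y‖ ≤ 1) (n : ℕ) :
    ‖iteratedFDeriv ℝ n G p fun _ => y‖ ≤ n.factorial * (L ^ n * M₀) := by
  have h := hG.norm_coeff_taylorSeries_line_le hb hb₀ hd hμ hM hp hM₀ hκL hL hy n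
  rw [coeff_taylorSeries, iteratedDeriv_comp_line hG.analyticOnNhd.contDiff, zero_smul,
    add_zero, norm_smul, norm_inv, RCLike.norm_natCast] at h
  exact (inv_mul_le_iff₀ (by positivity)).1 h

end IsCherednikSolution

end DiagonalBounds

section DerivativeEstimate

variable {V 𝕜 : Type*} [NormedAddCommGroup V] [InnerProductSpace ℝ V] [RCLike 𝕜]
  {D : HOData V} {l p x : V} {d Λ : ℝ} {μ G : V → 𝕜} {G₀ : V → ℝ}

/-- The scale of the Taylor bounds: at a point whose distance to the root hyperplanes avoiding it
is of order `d ≤ 1`, the Taylor coefficients of a solution grow at most like powers of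
`derivativeRate D / d`. -/
def derivativeRate (D : HOData V) : ℝ :=
  3 * ∑ α ∈ D.R, ‖α‖ + 4 * (∑ α ∈ D.Rpos, D.k α) * ∑ α ∈ D.R, ‖α‖ + ‖rhoHO D‖ + 2

theorem derivativeRate_pos (D : HOData V) : 0 < derivativeRate D := by
  have hk : 0 ≤ ∑ α ∈ D.Rpos, D.k α :=
    Finset.sum_nonneg fun α hα => (D.k_pos α (D.pos_subset hα)).le
  rw [derivativeRate]
  positivity

namespace IsCherednikSolution

theorem norm_iteratedFDeriv_diagonal_le_derivativeRate [Finite (weylGroup D)]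
    (hG : IsCherednikSolution D μ G) (hd : 0 < d) (hdΛ : d * Λ ≤ 1) (hΛ : 1 ≤ Λ)
    (hμ : ∀ ξ, ‖μ ξ‖ ≤ (‖rhoHO D‖ + 2 * Λ) * ‖ξ‖)
    (hp : ∀ α ∈ D.R, ⟪α, p⟫ = 0 ∨ d ≤ |⟪α, p⟫|) {M₀ : ℝ}
    (hM₀ : ∀ w : weylGroup D, ‖G (w.1 p)‖ ≤ M₀) (n : ℕ) {y : V} (hy : ‖y‖ ≤ 1) :
    ‖iteratedFDeriv ℝ n G p fun _ => y‖ ≤ n.factorial * ((derivativeRate D / d) ^ n * M₀) := by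
  have hk : 0 ≤ ∑ α ∈ D.Rpos, D.k α :=
    Finset.sum_nonneg fun α hα => (D.k_pos α (D.pos_subset hα)).le
  have hb₀ : 0 ≤ ∑ α ∈ D.R, ‖α‖ := Finset.sum_nonneg fun α _ => norm_nonneg α
  have hb : ∀ α ∈ D.R, ‖α‖ ≤ ∑ α ∈ D.R, ‖α‖ := fun α hα =>
    Finset.single_le_sum (f := fun α : V => ‖α‖) (fun α _ => norm_nonneg α) hα
  have hΛd : Λ ≤ d⁻¹ := by rwa [← one_div, le_div_iff₀' hd]
  have hd1 : 1 ≤ d⁻¹ := hΛ.trans hΛd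
  have hρ : ‖rhoHO D‖ ≤ ‖rhoHO D‖ * d⁻¹ := le_mul_of_one_le_right (norm_nonneg _) hd1
  refine hG.norm_iteratedFDeriv_diagonal_le hb hb₀ hd hμ (by positivity) hp hM₀ ?_ ?_ hy n
  all_goals
    rw [derivativeRate, div_eq_mul_inv]
    generalize ∑ α ∈ D.R, ‖α‖ = b at *
  · calc b * (2 + d⁻¹) ≤ b * (3 * d⁻¹) := by gcongr; linarith
      _ = 3 * b * d⁻¹ := by ring
      _ ≤ _ := by gcongr; nlinarith [mul_nonneg hk hb₀, norm_nonneg (rhoHO D)]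
  · rw [← Finset.sum_mul]
    generalize ∑ α ∈ D.Rpos, D.k α = K at *
    calc 2 * (K * (b * (1 + d⁻¹))) + (‖rhoHO D‖ + 2 * Λ)
        ≤ 2 * (K * (b * (2 * d⁻¹))) + (‖rhoHO D‖ * d⁻¹ + 2 * d⁻¹) := by gcongr; linarith
      _ = (4 * K * b + ‖rhoHO D‖ + 2) * d⁻¹ := by ring
      _ ≤ _ := by gcongr; linarith

end IsCherednikSolution

variable [Fintype (weylGroup D)]

theorem le_card_mul_Fsym (hG₀ : ∀ x, 0 ≤ G₀ x) (w : weylGroup D) (x : V) :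
    G₀ (w.1 x) ≤ Fintype.card (weylGroup D) * Fsym D G₀ x := by
  rw [Fsym, mul_inv_cancel_left₀ (Nat.cast_ne_zero.2 Fintype.card_ne_zero)]
  exact Finset.single_le_sum (f := fun w : weylGroup D => G₀ (w.1 x)) (fun _ _ => hG₀ _)
    (Finset.mem_univ w)

theorem Fsym_nonneg (hG₀ : ∀ x, 0 ≤ G₀ x) (x : V) : 0 ≤ Fsym D G₀ x :=
  mul_nonneg (by positivity) (Finset.sum_nonneg fun _ _ => hG₀ _)

namespace IsCherednikSolution

theorem norm_le_mul_exp_maxW (hG : IsCherednikSolution D μ G)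
    (hre : ∀ ξ, RCLike.re (μ ξ) = ⟪rhoHO D, ξ⟫ + ⟪l, ξ⟫)
    (hG₀ : IsCherednikSolution D (fun ξ => ⟪rhoHO D, ξ⟫) G₀) (x : V) :
    ‖G x‖ ≤ G₀ x * Real.exp (maxW D l x) :=
  hG.norm_le_mul_exp hG₀ fun w => by
    rw [hre]
    gcongr
    exact inner_weylGroup_apply_le_maxW D w l x

theorem Fsym_le_exp_mul (hG₀ : IsCherednikSolution D (fun ξ => ⟪rhoHO D, ξ⟫) G₀) (x p : V) :
    Fsym D G₀ p ≤ Real.exp (‖rhoHO D‖ * ‖x - p‖) * Fsym D G₀ x := by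
  rw [Fsym, Fsym, mul_left_comm, norm_sub_rev]
  exact mul_le_mul_of_nonneg_left (hG₀.sum_weylGroup_le_exp_mul x p) (by positivity)

theorem norm_apply_weylGroup_le_of_norm_sub_le (hG : IsCherednikSolution D μ G)
    (hre : ∀ ξ, RCLike.re (μ ξ) = ⟪rhoHO D, ξ⟫ + ⟪l, ξ⟫)
    (hG₀ : IsCherednikSolution D (fun ξ => ⟪rhoHO D, ξ⟫) G₀) {ε : ℝ} (hxp : ‖x - p‖ ≤ ε)
    (hl : ‖l‖ * ‖x - p‖ ≤ ε) (w : weylGroup D) :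
    ‖G (w.1 p)‖ ≤ Fintype.card (weylGroup D) * Real.exp (‖rhoHO D‖ * ε + ε) *
      (Fsym D G₀ x * Real.exp (maxW D l x)) := by
  have hF := Fsym_nonneg (D := D) hG₀.nonneg x
  calc ‖G (w.1 p)‖ ≤ G₀ (w.1 p) * Real.exp (maxW D l p) := by
        simpa only [maxW_weylGroup_apply] using hG.norm_le_mul_exp_maxW hre hG₀ (w.1 p)
    _ ≤ Fintype.card (weylGroup D) * (Real.exp (‖rhoHO D‖ * ε) * Fsym D G₀ x) *
          Real.exp (maxW D l x + ε) := by
        gcongr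
        · refine (le_card_mul_Fsym hG₀.nonneg w p).trans ?_
          gcongr
          refine (hG₀.Fsym_le_exp_mul x p).trans ?_
          gcongr
        · exact (maxW_le_add D l x p).trans (by gcongr)
    _ = _ := by rw [Real.exp_add, Real.exp_add]; ring

theorem norm_iteratedFDeriv_le_of_adapted (hG : IsCherednikSolution D μ G)
    (hre : ∀ ξ, RCLike.re (μ ξ) = ⟪rhoHO D, ξ⟫ + ⟪l, ξ⟫)
    (hμ : ∀ ξ, ‖μ ξ‖ ≤ (‖rhoHO D‖ + 2 * Λ) * ‖ξ‖) (hΛ : 1 ≤ Λ) (hl : ‖l‖ ≤ Λ)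
    (hG₀ : IsCherednikSolution D (fun ξ => ⟪rhoHO D, ξ⟫) G₀) {ε : ℝ}
    (hε₀ : 0 ≤ ε) (hε : ε ≤ (8 * Real.exp 1 * derivativeRate D)⁻¹) (hd : 0 < d)
    (hdΛ : d * Λ ≤ 1) (hxp : ‖x - p‖ ≤ ε * d)
    (hp : ∀ α ∈ D.R, ⟪α, p⟫ = 0 ∨ d ≤ |⟪α, p⟫|) (N : ℕ) :
    ‖iteratedFDeriv ℝ N G x‖ ≤ N.factorial * (4 * Real.exp 1 * (derivativeRate D / d)) ^ N *
      (Fintype.card (weylGroup D) * Real.exp (‖rhoHO D‖ * ε + ε) *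
        (Fsym D G₀ x * Real.exp (maxW D l x))) * 2 := by
  have hA := derivativeRate_pos D
  have hxpε : ‖x - p‖ ≤ ε := hxp.trans (mul_le_of_le_one_right hε₀ (by nlinarith))
  have hlε : ‖l‖ * ‖x - p‖ ≤ ε := calc
    ‖l‖ * ‖x - p‖ ≤ Λ * (ε * d) := by gcongr
    _ = ε * (d * Λ) := by ring
    _ ≤ ε := mul_le_of_le_one_right hε₀ hdΛ
  have hradius : ‖x - p‖ ≤ (8 * Real.exp 1 * (derivativeRate D / d))⁻¹ := calc
    ‖x - p‖ ≤ (8 * Real.exp 1 * derivativeRate D)⁻¹ * d := hxp.trans (by gcongr)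
    _ = (8 * Real.exp 1 * (derivativeRate D / d))⁻¹ := by field_simp
  simpa only [add_sub_cancel] using norm_iteratedFDeriv_add_le_of_diagonal hG.analyticOnNhd
    (div_pos hA hd) (fun n y => hG.norm_iteratedFDeriv_diagonal_le_derivativeRate hd hdΛ hΛ hμ hp
      (hG.norm_apply_weylGroup_le_of_norm_sub_le hre hG₀ hxpε hlε) n) hradius N

theorem exists_norm_iteratedFDeriv_le (D : HOData V) [Fintype (weylGroup D)] (N : ℕ) :
    ∃ C > 0, ∀ {μ G : V → 𝕜} {G₀ : V → ℝ} {l : V} {Λ : ℝ}, IsCherednikSolution D μ G →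
      (∀ ξ, RCLike.re (μ ξ) = ⟪rhoHO D, ξ⟫ + ⟪l, ξ⟫) →
      (∀ ξ, ‖μ ξ‖ ≤ (‖rhoHO D‖ + 2 * Λ) * ‖ξ‖) → 1 ≤ Λ → ‖l‖ ≤ Λ →
      IsCherednikSolution D (fun ξ => ⟪rhoHO D, ξ⟫) G₀ → ∀ x,
      ‖iteratedFDeriv ℝ N G x‖ ≤ C * Λ ^ N * Fsym D G₀ x * Real.exp (maxW D l x) := by
  have hA := derivativeRate_pos D
  set ε : ℝ := (8 * Real.exp 1 * derivativeRate D)⁻¹ with hε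
  have hε₀ : 0 < ε := by positivity
  obtain ⟨c, hc, hadapt⟩ := exists_adapted_point
    (fun α : D.R => (innerₗ V (α : V) : Module.Dual ℝ V)) hε₀
  refine ⟨N.factorial * (4 * Real.exp 1 * (derivativeRate D / c)) ^ N *
    (Fintype.card (weylGroup D) * Real.exp (‖rhoHO D‖ * ε + ε)) * 2, ?_, ?_⟩
  · have : 0 < Fintype.card (weylGroup D) := Fintype.card_pos
    positivity
  intro μ G G₀ l Λ hG hre hμ hΛ hl hG₀ x
  have hΛ₀ : 0 < Λ := one_pos.trans_le hΛ
  obtain ⟨p, d, hcd, hdΛ, hxp, hp⟩ := hadapt Λ⁻¹ (by positivity) x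
  have hd : 0 < d := (by positivity : 0 < c * Λ⁻¹).trans_le hcd
  have hdΛ' : d * Λ ≤ 1 := by rwa [← le_div_iff₀ hΛ₀, one_div]
  have hrate : derivativeRate D / d ≤ derivativeRate D / c * Λ := by
    rw [div_mul_eq_mul_div, ← div_inv_eq_mul, div_div, mul_comm Λ⁻¹]
    gcongr
  have hF := Fsym_nonneg (D := D) hG₀.nonneg x
  calc ‖iteratedFDeriv ℝ N G x‖
      ≤ N.factorial * (4 * Real.exp 1 * (derivativeRate D / d)) ^ N *
        (Fintype.card (weylGroup D) * Real.exp (‖rhoHO D‖ * ε + ε) *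
          (Fsym D G₀ x * Real.exp (maxW D l x))) * 2 :=
        hG.norm_iteratedFDeriv_le_of_adapted hre hμ hΛ hl hG₀ hε₀.le hε.le hd hdΛ' hxp
          (fun α hα => hp ⟨α, hα⟩) N
    _ ≤ N.factorial * (4 * Real.exp 1 * (derivativeRate D / c * Λ)) ^ N *
        (Fintype.card (weylGroup D) * Real.exp (‖rhoHO D‖ * ε + ε) *
          (Fsym D G₀ x * Real.exp (maxW D l x))) * 2 := by gcongr
    _ = _ := by rw [← mul_assoc (4 * Real.exp 1), mul_pow _ Λ]; ring

end IsCherednikSolution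

end DerivativeEstimate

section Opdam

variable {V : Type*} [NormedAddCommGroup V] [InnerProductSpace ℝ V] {D : HOData V} {l₁ l₂ : V}

theorem IsOpdamR.isCherednikSolution {l : V} {G : V → ℝ} (hG : IsOpdamR D l G) :
    IsCherednikSolution D (fun ξ => ⟪rhoHO D + l, ξ⟫) G :=
  ⟨hG.1, hG.2.1, hG.2.2⟩

/-- The complex-linear pairing `(ρ + λ, ξ)` for the complex spectral parameter `λ = l₁ + i l₂`. -/
def spectralForm (D : HOData V) (l₁ l₂ ξ : V) : ℂ :=
  ((⟪rhoHO D + l₁, ξ⟫ : ℝ) : ℂ) + Complex.I * ((⟪l₂, ξ⟫ : ℝ) : ℂ)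

theorem re_spectralForm (D : HOData V) (l₁ l₂ ξ : V) :
    (spectralForm D l₁ l₂ ξ).re = ⟪rhoHO D, ξ⟫ + ⟪l₁, ξ⟫ := by
  simp [spectralForm, inner_add_left]

theorem norm_spectralForm_le (D : HOData V) (l₁ l₂ ξ : V) :
    ‖spectralForm D l₁ l₂ ξ‖ ≤ (‖rhoHO D‖ + ‖l₁‖ + ‖l₂‖) * ‖ξ‖ := by
  refine (norm_add_le _ _).trans ?_
  rw [norm_mul, Complex.norm_I, one_mul, Complex.norm_real, Complex.norm_real, add_mul]
  refine add_le_add ((norm_inner_le_norm _ _).trans ?_) (norm_inner_le_norm _ _)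
  gcongr
  exact norm_add_le _ _

theorem IsOpdamC.isCherednikSolution {G : V → ℂ} (hG : IsOpdamC D l₁ l₂ G) :
    IsCherednikSolution D (spectralForm D l₁ l₂) G :=
  ⟨hG.1, hG.2.1, hG.2.2⟩

theorem statement15_general (D : HOData V) [Fintype (weylGroup D)] (N : ℕ) :
    ∃ C : ℝ, 0 < C ∧ ∀ {l₁ l₂ : V} {G : V → ℂ} {G₀ : V → ℝ}, IsOpdamC D l₁ l₂ G →
      IsOpdamR D 0 G₀ → ∀ x, ‖iteratedFDeriv ℝ N G x‖ ≤
        C * (1 + Real.sqrt (‖l₁‖ ^ 2 + ‖l₂‖ ^ 2)) ^ N * Fsym D G₀ x *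
          Real.exp (maxW D l₁ x) := by
  obtain ⟨C, hC, h⟩ := IsCherednikSolution.exists_norm_iteratedFDeriv_le (𝕜 := ℂ) D N
  refine ⟨C, hC, fun {l₁ l₂ G G₀} hG hG₀ => ?_⟩
  have hl₁ : ‖l₁‖ ≤ Real.sqrt (‖l₁‖ ^ 2 + ‖l₂‖ ^ 2) :=
    Real.le_sqrt_of_sq_le (le_add_of_nonneg_right (sq_nonneg _))
  have hl₂ : ‖l₂‖ ≤ Real.sqrt (‖l₁‖ ^ 2 + ‖l₂‖ ^ 2) :=
    Real.le_sqrt_of_sq_le (le_add_of_nonneg_left (sq_nonneg _))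
  refine h hG.isCherednikSolution (re_spectralForm D l₁ l₂) (fun ξ => ?_)
    (le_add_of_nonneg_right (Real.sqrt_nonneg _)) (by linarith)
    (by simpa using hG₀.isCherednikSolution)
  refine (norm_spectralForm_le D l₁ l₂ ξ).trans ?_
  exact mul_le_mul_of_nonneg_right (by linarith) (norm_nonneg ξ)

end Opdam

/-- for each `N`, uniformly in `λ ∈ h` and in unit directions `ξ₁,…,ξ_N`,
`|∂_{ξ₁} ⋯ ∂_{ξ_N} G_λ(x)| ≤ C (1+|λ|)^N F₀(x) e^{max_w (w Re λ, x)}`. -/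
theorem statement15 (D : HOData E) [Fintype (weylGroup D)]
    (G : E → E → E → ℂ) (hG : ∀ l1 l2, IsOpdamC D l1 l2 (G l1 l2))
    (Gzero : E → ℝ) (hG0 : IsOpdamR D 0 Gzero) (N : ℕ) :
    ∃ C : ℝ, 0 < C ∧ ∀ (l1 l2 x : E) (ξ : Fin N → E), (∀ i, ‖ξ i‖ = 1) →
      ‖iteratedFDeriv ℝ N (G l1 l2) x ξ‖ ≤
        C * (1 + Real.sqrt (‖l1‖ ^ 2 + ‖l2‖ ^ 2)) ^ N * Fsym D Gzero x *
          Real.exp (maxW D l1 x) := by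
  obtain ⟨C, hC, h⟩ := statement15_general D N
  exact ⟨C, hC, fun l1 l2 x ξ hξ => ((iteratedFDeriv ℝ N (G l1 l2) x).le_opNorm ξ).trans
    (by simpa only [hξ, Finset.prod_const_one, mul_one] using h (hG l1 l2) hG0 x)⟩
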